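/- For every nonnegative integer n and every k with 0 ≤ k ≤ 4, N(k,5,5n+4) = p(5n+4)/5. -/

import Mathlib

/-- The rank of a partition: its largest part minus its number of parts. -/
def Nat.Partition.rank {n : ℕ} (π : Nat.Partition n) : ℤ :=
  (π.parts.sup : ℤ) - (Multiset.card π.parts : ℤ)

namespace DysonRank

open Complex Filter Topology

/-! ### Gaussian sums over the integers -/

theorem summable_rexp_sq {a : ℝ} (ha : a < 0) (b : ℝ) :
    Summable fun n : ℤ => Real.exp (a * n ^ 2 + b * n) := by
  have h := ((summable_jacobiTheta₂_term_iff (b / (2 * Real.pi * I)) (a / (Real.pi * I))).2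
    (by
      have : (a : ℂ) / (Real.pi * I) = ((-a / Real.pi : ℝ) : ℂ) * I := by
        have := Real.pi_ne_zero
        push_cast
        field_simp
        rw [I_sq]; ring
      rw [this]
      simp only [mul_im, ofReal_re, I_im, ofReal_im, I_re, mul_one, mul_zero, add_zero]
      exact div_pos (by linarith) Real.pi_pos)).norm
  refine h.congr fun n => ?_
  have hp : (Real.pi : ℂ) ≠ 0 := by exact_mod_cast Real.pi_ne_zero
  have : jacobiTheta₂_term n (b / (2 * Real.pi * I)) (a / (Real.pi * I)) =
      cexp ((a * n ^ 2 + b * n : ℝ) : ℂ) := by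
    unfold jacobiTheta₂_term
    congr 1
    push_cast
    field_simp
    ring
  rw [this, norm_exp, ofReal_re]

theorem summable_rexp_sq_abs {a : ℝ} (ha : a < 0) (b : ℝ) :
    Summable fun n : ℤ => Real.exp (a * n ^ 2 + b * |(n : ℝ)|) := by
  refine Summable.of_nonneg_of_le (fun n => (Real.exp_pos _).le) (fun n => ?_)
    ((summable_rexp_sq ha b).add (summable_rexp_sq ha (-b)))
  rcases abs_cases (n : ℝ) with ⟨h, _⟩ | ⟨h, _⟩
  · rw [h]
    exact le_add_of_nonneg_right (Real.exp_pos _).le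
  · rw [h, show b * -(n : ℝ) = -b * n by ring]
    exact le_add_of_nonneg_left (Real.exp_pos _).le

theorem norm_neg_one_zpow (n : ℤ) : ‖((-1 : ℂ)) ^ n‖ = 1 := by
  simp

theorem summable_cexp_sq {a : ℂ} (ha : a.re < 0) (b : ℂ) :
    Summable fun n : ℤ => (-1 : ℂ) ^ n * cexp (a * n ^ 2 + b * n) := by
  refine Summable.of_norm ((summable_rexp_sq ha b.re).congr fun n => ?_)
  rw [norm_mul, norm_neg_one_zpow, one_mul, norm_exp]
  congr 1
  simp [← ofReal_intCast, ← ofReal_pow]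

/-! ### Termwise differentiation on a neighbourhood -/

/-- A bound valid for all but finitely many terms suffices for the Weierstrass test. -/
theorem exists_summable_bound {F : ℤ → ℂ → ℂ} {u₀ : ℂ} (hF : ∀ n, Differentiable ℂ (F n))
    {v : ℤ → ℝ} (hv : Summable v)
    (hb : ∀ᶠ n in cofinite, ∀ u ∈ Metric.ball u₀ 1, ‖F n u‖ ≤ v n) :
    ∃ c : ℤ → ℝ, Summable c ∧ ∀ n, ∀ u ∈ Metric.ball u₀ 1, ‖F n u‖ ≤ c n := by
  classical
  have hC : ∀ n, ∃ C : ℝ, ∀ u ∈ Metric.ball u₀ 1, ‖F n u‖ ≤ C := by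
    intro n
    obtain ⟨C, hC⟩ := (isCompact_closedBall u₀ 1).exists_bound_of_continuousOn
      (hF n).continuous.continuousOn
    exact ⟨C, fun u hu => hC u (Metric.ball_subset_closedBall hu)⟩
  choose C hC using hC
  refine ⟨fun n => if ∀ u ∈ Metric.ball u₀ 1, ‖F n u‖ ≤ v n then v n else C n, ?_, ?_⟩
  · refine hv.congr_cofinite ?_
    filter_upwards [hb] with n hn
    rw [if_pos hn]
  · intro n u hu
    dsimp only
    split_ifs with h
    · exact h u hu
    · exact hC n u hu

theorem differentiableAt_tsum_of_eventually {F : ℤ → ℂ → ℂ} {u₀ : ℂ}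
    (hF : ∀ n, Differentiable ℂ (F n)) {v : ℤ → ℝ} (hv : Summable v)
    (hb : ∀ᶠ n in cofinite, ∀ u ∈ Metric.ball u₀ 1, ‖F n u‖ ≤ v n) :
    DifferentiableAt ℂ (fun u => ∑' n, F n u) u₀ := by
  obtain ⟨c, hc, hcb⟩ := exists_summable_bound hF hv hb
  exact (differentiableOn_tsum_of_summable_norm hc (fun n => (hF n).differentiableOn)
    Metric.isOpen_ball hcb).differentiableAt (Metric.ball_mem_nhds u₀ one_pos)

theorem hasSum_deriv_of_eventually {F : ℤ → ℂ → ℂ} {u₀ : ℂ}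
    (hF : ∀ n, Differentiable ℂ (F n)) {v : ℤ → ℝ} (hv : Summable v)
    (hb : ∀ᶠ n in cofinite, ∀ u ∈ Metric.ball u₀ 1, ‖F n u‖ ≤ v n) :
    HasSum (fun n => deriv (F n) u₀) (deriv (fun u => ∑' n, F n u) u₀) := by
  obtain ⟨c, hc, hcb⟩ := exists_summable_bound hF hv hb
  exact hasSum_deriv_of_summable_norm hc (fun n => (hF n).differentiableOn)
    Metric.isOpen_ball hcb (Metric.mem_ball_self one_pos)

/-! ### Doubly periodic entire functions and quotients of entire functions -/

theorem eq_of_doubly_periodic {f : ℂ → ℂ} (hf : Differentiable ℂ f) {τ : ℂ} (hτ : τ.re < 0)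
    (h₁ : ∀ u, f (u + 2 * τ) = f u) (h₂ : ∀ u, f (u + 2 * Real.pi * I) = f u) (u v : ℂ) :
    f u = f v := by
  have p₁ : Function.Periodic f (2 * τ) := h₁
  have p₂ : Function.Periodic f (2 * Real.pi * I) := h₂
  refine hf.apply_eq_apply_of_bounded ?_ u v
  have hK : IsCompact ((fun p : ℝ × ℝ => (p.1 : ℂ) * (2 * τ) + p.2 * (2 * Real.pi * I)) ''
      (Set.Icc 0 1 ×ˢ Set.Icc 0 1)) :=
    (isCompact_Icc.prod isCompact_Icc).image (by fun_prop)
  refine ((hK.image hf.continuous).isBounded).subset ?_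
  rintro _ ⟨w, rfl⟩
  have hpi := Real.pi_pos
  obtain ⟨a, ha⟩ : ∃ a : ℝ, a * (2 * τ.re) = w.re :=
    ⟨w.re / (2 * τ.re), div_mul_cancel₀ _ (by linarith)⟩
  obtain ⟨b, hb⟩ : ∃ b : ℝ, b * (2 * Real.pi) = w.im - a * (2 * τ.im) :=
    ⟨(w.im - a * (2 * τ.im)) / (2 * Real.pi), div_mul_cancel₀ _ (by positivity)⟩
  have hw : w = (a : ℂ) * (2 * τ) + b * (2 * Real.pi * I) := by
    apply Complex.ext
    · simp [ha]
    · simp [hb]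
  refine ⟨((Int.fract a : ℝ) : ℂ) * (2 * τ) + ((Int.fract b : ℝ) : ℂ) * (2 * Real.pi * I),
    ⟨(Int.fract a, Int.fract b), ⟨⟨Int.fract_nonneg _, (Int.fract_lt_one _).le⟩,
      ⟨Int.fract_nonneg _, (Int.fract_lt_one _).le⟩⟩, by simp⟩, ?_⟩
  have e : w = (((Int.fract a : ℝ) : ℂ) * (2 * τ) + ((Int.fract b : ℝ) : ℂ) * (2 * Real.pi * I)) +
      (⌊a⌋ : ℤ) * (2 * τ) + (⌊b⌋ : ℤ) * (2 * Real.pi * I) := by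
    conv_lhs => rw [hw, ← Int.fract_add_floor a, ← Int.fract_add_floor b]
    push_cast
    ring
  conv_rhs => rw [e]
  rw [p₂.int_mul ⌊b⌋, p₁.int_mul ⌊a⌋]

/-- The quotient `f / g`, with the removable singularities at simple zeros of `g` filled in. -/
noncomputable def removableQuotient (f g : ℂ → ℂ) (u : ℂ) : ℂ :=
  open Classical in if g u = 0 then deriv f u / deriv g u else f u / g u

theorem differentiable_removableQuotient {f g : ℂ → ℂ} (hf : Differentiable ℂ f)
    (hg : Differentiable ℂ g) (h : ∀ u, g u = 0 → f u = 0 ∧ deriv g u ≠ 0) :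
    Differentiable ℂ (removableQuotient f g) := by
  intro u₀
  by_cases h₀ : g u₀ = 0
  · obtain ⟨hf₀, hg₀⟩ := h u₀ h₀
    have df : DifferentiableAt ℂ (dslope f u₀) u₀ :=
      ((Complex.differentiableOn_dslope (s := Set.univ) Filter.univ_mem).2
        hf.differentiableOn).differentiableAt Filter.univ_mem
    have dg : DifferentiableAt ℂ (dslope g u₀) u₀ :=
      ((Complex.differentiableOn_dslope (s := Set.univ) Filter.univ_mem).2
        hg.differentiableOn).differentiableAt Filter.univ_mem
    have hne : dslope g u₀ u₀ ≠ 0 := by rwa [dslope_same]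
    refine (df.div dg hne).congr_of_eventuallyEq ?_
    filter_upwards [dg.continuousAt.eventually_ne hne] with u hu
    by_cases hu₀ : u = u₀
    · subst hu₀
      simp [removableQuotient, h₀, dslope_same]
    · have e₁ : f u = (u - u₀) * dslope f u₀ u := by
        have := sub_smul_dslope f u₀ u
        simpa [hf₀] using this.symm
      have e₂ : g u = (u - u₀) * dslope g u₀ u := by
        have := sub_smul_dslope g u₀ u
        simpa [h₀] using this.symm
      have hs : u - u₀ ≠ 0 := sub_ne_zero.2 hu₀
      have hgu : g u ≠ 0 := by rw [e₂]; exact mul_ne_zero hs hu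
      rw [removableQuotient, if_neg hgu, e₁, e₂, Pi.div_apply, mul_div_mul_left _ _ hs]
  · refine ((hf u₀).div (hg u₀) h₀).congr_of_eventuallyEq ?_
    filter_upwards [(hg u₀).continuousAt.eventually_ne h₀] with u hu
    simp [removableQuotient, hu]

/-! ### Theta functions -/

/-- The theta series `∑ (-1)^n exp (a n² + b n)`. -/
noncomputable def theta (a b : ℂ) : ℂ :=
  ∑' n : ℤ, (-1 : ℂ) ^ n * cexp (a * n ^ 2 + b * n)

theorem neg_one_zpow_mul_self (n : ℤ) : ((-1 : ℂ)) ^ n * (-1) ^ n = 1 := by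
  rw [← mul_zpow]; simp

theorem theta_neg (a b : ℂ) : theta a (-b) = theta a b := by
  unfold theta
  rw [← (Equiv.neg ℤ).tsum_eq]
  refine tsum_congr fun n => ?_
  simp only [Equiv.neg_apply, zpow_neg, Int.cast_neg]
  congr 1
  · rw [← inv_zpow, inv_neg, inv_one]
  · congr 1; ring

theorem theta_shift (a b : ℂ) (m : ℤ) :
    theta a b = (-1) ^ m * cexp (a * m ^ 2 + b * m) * theta a (b + 2 * a * m) := by
  unfold theta
  rw [← (Equiv.addRight m).tsum_eq, ← tsum_mul_left]
  refine tsum_congr fun n => ?_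
  simp only [Equiv.coe_addRight, Int.cast_add]
  rw [zpow_add₀ (by norm_num), mul_mul_mul_comm, ← Complex.exp_add, mul_comm ((-1 : ℂ) ^ n)]
  congr 2
  ring

theorem theta_add_two_mul (a b : ℂ) : theta a (b + 2 * a) = -cexp (-a - b) * theta a b := by
  rw [theta_shift a b 1, zpow_one, ← mul_assoc, ← mul_assoc]
  simp only [Int.cast_one, mul_one, one_pow]
  rw [mul_neg_one, neg_neg, ← Complex.exp_add]
  simp

theorem theta_periodic (a b : ℂ) (m : ℤ) : theta a (b + m * (2 * Real.pi * I)) = theta a b := by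
  unfold theta
  refine tsum_congr fun n => ?_
  congr 1
  rw [Complex.exp_eq_exp_iff_exists_int]
  exact ⟨m * n, by push_cast; ring⟩

theorem summable_theta {a : ℂ} (ha : a.re < 0) (b : ℂ) :
    Summable fun n : ℤ => (-1 : ℂ) ^ n * cexp (a * n ^ 2 + b * n) :=
  summable_cexp_sq ha b

theorem theta_term_bound (a u₀ : ℂ) (n : ℤ) :
    ∀ u ∈ Metric.ball u₀ 1, ‖(-1 : ℂ) ^ n * cexp (a * n ^ 2 + u * n)‖ ≤
      Real.exp (a.re * n ^ 2 + (|u₀.re| + 1) * |(n : ℝ)|) := by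
  intro u hu
  rw [norm_mul, norm_neg_one_zpow, one_mul, norm_exp]
  apply Real.exp_le_exp.2
  have : (a * n ^ 2 + u * n).re = a.re * n ^ 2 + u.re * n := by
    simp [← ofReal_intCast, ← ofReal_pow]
  rw [this]
  refine add_le_add_right ?_ _
  have h1 : |u.re| ≤ |u₀.re| + 1 := by
    have h2 : |(u - u₀).re| ≤ 1 :=
      (abs_re_le_norm _).trans (by rw [← dist_eq_norm]; exact (Metric.mem_ball.1 hu).le)
    rw [sub_re] at h2
    have := abs_sub_abs_le_abs_sub u.re u₀.re
    linarith
  calc u.re * n ≤ |u.re * n| := le_abs_self _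
    _ = |u.re| * |(n : ℝ)| := abs_mul _ _
    _ ≤ _ := by gcongr

theorem differentiable_theta {a : ℂ} (ha : a.re < 0) : Differentiable ℂ (theta a) := by
  intro u₀
  exact differentiableAt_tsum_of_eventually
    (F := fun n u => (-1 : ℂ) ^ n * cexp (a * n ^ 2 + u * n)) (fun n => by fun_prop)
    (summable_rexp_sq_abs ha (|u₀.re| + 1)) (.of_forall (theta_term_bound a u₀))

theorem hasSum_deriv_theta {a : ℂ} (ha : a.re < 0) (b : ℂ) :
    HasSum (fun n : ℤ => (-1 : ℂ) ^ n * (n * cexp (a * n ^ 2 + b * n))) (deriv (theta a) b) := by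
  have h := hasSum_deriv_of_eventually
    (F := fun n u => (-1 : ℂ) ^ n * cexp (a * n ^ 2 + u * n)) (fun n => by fun_prop)
    (summable_rexp_sq_abs ha (|b.re| + 1)) (.of_forall (theta_term_bound a b))
  refine h.congr_fun fun n => ?_
  have : HasDerivAt (fun u : ℂ => (-1 : ℂ) ^ n * cexp (a * n ^ 2 + u * n))
      ((-1 : ℂ) ^ n * (cexp (a * n ^ 2 + b * n) * (1 * n))) b :=
    ((((hasDerivAt_id b).mul_const (n : ℂ)).const_add (a * n ^ 2)).cexp).const_mul _
  rw [this.deriv]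
  ring

/-- Jacobi's function `∑ (-1)^n z^n Q^(n(n-1)/2)` with `z = exp u` and `Q = exp (2τ)`. -/
noncomputable def jac (τ u : ℂ) : ℂ := theta τ (u - τ)

theorem jac_add_two_mul (τ u : ℂ) : jac τ (u + 2 * τ) = -cexp (-u) * jac τ u := by
  unfold jac
  rw [show u + 2 * τ - τ = (u - τ) + 2 * τ by ring, theta_add_two_mul]
  congr 3; ring

theorem jac_neg (τ u : ℂ) : jac τ (-u) = -cexp (-u) * jac τ u := by
  rw [← jac_add_two_mul]
  unfold jac
  rw [← theta_neg]
  congr 1; ring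

theorem jac_periodic (τ u : ℂ) (m : ℤ) : jac τ (u + m * (2 * Real.pi * I)) = jac τ u := by
  unfold jac
  rw [← theta_periodic τ (u - τ) m]
  congr 1; ring

theorem jac_zero (τ : ℂ) : jac τ 0 = 0 := by
  have := jac_neg τ 0
  rw [neg_zero, Complex.exp_zero] at this
  linear_combination this / 2

theorem jac_shift (τ u : ℂ) (n : ℤ) :
    jac τ (u + 2 * n * τ) = (-1) ^ n * cexp (-n * u - n * (n - 1) * τ) * jac τ u := by
  unfold jac
  rw [theta_shift τ (u - τ) n, show u + 2 * n * τ - τ = u - τ + 2 * τ * n by ring,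
    ← mul_assoc, mul_mul_mul_comm, neg_one_zpow_mul_self, ← Complex.exp_add]
  ring_nf
  simp

theorem differentiable_jac {τ : ℂ} (hτ : τ.re < 0) : Differentiable ℂ (jac τ) :=
  (differentiable_theta hτ).comp (by fun_prop : Differentiable ℂ fun u : ℂ => u - τ)

theorem jac_eq_zero_of_exp_eq_one {τ u : ℂ} (h : cexp u = 1) : jac τ u = 0 := by
  obtain ⟨n, rfl⟩ := Complex.exp_eq_one_iff.1 h
  rw [← zero_add ((n : ℂ) * _), jac_periodic, jac_zero]

theorem deriv_jac_neg {τ : ℂ} (hτ : τ.re < 0) {u : ℂ} :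
    -deriv (jac τ) (-u) = cexp (-u) * jac τ u - cexp (-u) * deriv (jac τ) u := by
  have hd := differentiable_jac hτ
  have h1 : HasDerivAt (fun u => jac τ (-u)) (deriv (jac τ) (-u) * -1) u :=
    (hd (-u)).hasDerivAt.comp u (hasDerivAt_neg u)
  have h2 : HasDerivAt (fun u => -cexp (-u) * jac τ u)
      (-(cexp (-u) * -1) * jac τ u + -cexp (-u) * deriv (jac τ) u) u :=
    (((hasDerivAt_neg u).cexp).neg).mul (hd u).hasDerivAt
  have h3 : (fun u => jac τ (-u)) = fun u => -cexp (-u) * jac τ u := funext (jac_neg τ)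
  rw [h3] at h1
  have := h1.unique h2
  linear_combination this

theorem deriv_jac_add {τ : ℂ} (hτ : τ.re < 0) {u : ℂ} :
    deriv (jac τ) (u + 2 * τ) = cexp (-u) * jac τ u - cexp (-u) * deriv (jac τ) u := by
  have hd := differentiable_jac hτ
  have h1 : HasDerivAt (fun u => jac τ (u + 2 * τ)) (deriv (jac τ) (u + 2 * τ) * 1) u :=
    HasDerivAt.comp (h₂ := jac τ) u (hd (u + 2 * τ)).hasDerivAt ((hasDerivAt_id u).add_const _)
  have h2 : HasDerivAt (fun u => -cexp (-u) * jac τ u)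
      (-(cexp (-u) * -1) * jac τ u + -cexp (-u) * deriv (jac τ) u) u :=
    (((hasDerivAt_neg u).cexp).neg).mul (hd u).hasDerivAt
  have h3 : (fun u => jac τ (u + 2 * τ)) = fun u => -cexp (-u) * jac τ u :=
    funext (jac_add_two_mul τ)
  rw [h3] at h1
  have := h1.unique h2
  linear_combination this

/-- The entire function `jac τ u / (1 - exp u)`. -/
noncomputable def jacQuot (τ : ℂ) : ℂ → ℂ := removableQuotient (jac τ) fun u => 1 - cexp u

theorem deriv_one_sub_exp (u : ℂ) : deriv (fun u => 1 - cexp u) u = -cexp u := by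
  simp

theorem differentiable_jacQuot {τ : ℂ} (hτ : τ.re < 0) : Differentiable ℂ (jacQuot τ) := by
  refine differentiable_removableQuotient (differentiable_jac hτ) (by fun_prop) fun u hu => ?_
  exact ⟨jac_eq_zero_of_exp_eq_one (sub_eq_zero.1 hu).symm, by
    rw [deriv_one_sub_exp]; exact neg_ne_zero.2 (Complex.exp_ne_zero _)⟩

theorem jacQuot_of_ne {τ u : ℂ} (h : cexp u ≠ 1) : jacQuot τ u = jac τ u / (1 - cexp u) :=
  if_neg (sub_ne_zero.2 h.symm)

theorem one_sub_exp_mul_jacQuot (τ u : ℂ) : (1 - cexp u) * jacQuot τ u = jac τ u := by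
  by_cases h : cexp u = 1
  · rw [jac_eq_zero_of_exp_eq_one h, h, sub_self, zero_mul]
  · rw [jacQuot_of_ne h, mul_div_cancel₀ _ (sub_ne_zero.2 (Ne.symm h))]

theorem jacQuot_zero (τ : ℂ) : jacQuot τ 0 = -deriv (jac τ) 0 := by
  unfold jacQuot removableQuotient
  rw [if_pos (by simp), deriv_one_sub_exp, Complex.exp_zero, div_neg, div_one]

theorem jacQuot_neg {τ : ℂ} (hτ : τ.re < 0) (u : ℂ) : jacQuot τ (-u) = jacQuot τ u := by
  by_cases h : cexp u = 1
  · have h' : cexp (-u) = 1 := by rw [Complex.exp_neg, h, inv_one]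
    unfold jacQuot removableQuotient
    rw [if_pos (by simp [h']), if_pos (by simp [h]), deriv_one_sub_exp,
      deriv_one_sub_exp, h, h']
    have := deriv_jac_neg hτ (u := u)
    rw [h', jac_eq_zero_of_exp_eq_one h] at this
    rw [div_neg, div_neg, div_one, div_one]
    linear_combination this
  · have h' : cexp (-u) ≠ 1 := by rwa [Complex.exp_neg, Ne, inv_eq_one]
    rw [jacQuot_of_ne h, jacQuot_of_ne h', jac_neg,
      div_eq_div_iff (sub_ne_zero.2 h'.symm) (sub_ne_zero.2 (Ne.symm h)), Complex.exp_neg]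
    field_simp
    ring

theorem deriv_jacQuot_zero {τ : ℂ} (hτ : τ.re < 0) : deriv (jacQuot τ) 0 = 0 := by
  have h := deriv_comp_neg (jacQuot τ) 0
  rw [funext (jacQuot_neg hτ), neg_zero] at h
  linear_combination h / 2

/-! ### Lambert series -/

theorem half_le_norm_one_sub_exp {z : ℂ} (h : 1 ≤ |z.re|) : 1 / 2 ≤ ‖1 - cexp z‖ := by
  have h2 := abs_norm_sub_norm_le 1 (cexp z)
  rw [norm_one, norm_exp] at h2
  refine le_trans ?_ h2
  rcases le_abs.1 h with h | h
  · have : 2 ≤ Real.exp z.re := by linarith [Real.add_one_le_exp z.re]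
    rw [le_abs]; right; linarith
  · have h3 : 2 ≤ Real.exp (-z.re) := by linarith [Real.add_one_le_exp (-z.re)]
    rw [Real.exp_neg] at h3
    have h4 := Real.exp_pos z.re
    have : Real.exp z.re * 2 ≤ 1 := by
      calc Real.exp z.re * 2 ≤ Real.exp z.re * (Real.exp z.re)⁻¹ := by gcongr
        _ = 1 := mul_inv_cancel₀ h4.ne'
    rw [le_abs]; left; linarith

theorem eventually_half_le_norm {τ : ℂ} (hτ : τ.re < 0) (u₀ : ℂ) :
    ∀ᶠ n : ℤ in cofinite, ∀ u ∈ Metric.ball u₀ 1, 1 / 2 ≤ ‖1 - cexp (u + 2 * n * τ)‖ := by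
  have ht : Tendsto (fun n : ℤ => |(n : ℝ)|) cofinite atTop := by
    rw [Int.cofinite_eq]
    exact (tendsto_abs_atBot_atTop.comp (tendsto_intCast_atBot_iff.2 tendsto_id)).sup
      (tendsto_abs_atTop_atTop.comp tendsto_intCast_atTop_atTop)
  filter_upwards [ht.eventually_ge_atTop ((|u₀.re| + 2) / (2 * -τ.re))] with n hn u hu
  apply half_le_norm_one_sub_exp
  have h2 : |(u - u₀).re| ≤ 1 :=
    (abs_re_le_norm _).trans (by rw [← dist_eq_norm]; exact (Metric.mem_ball.1 hu).le)
  rw [div_le_iff₀ (by linarith)] at hn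
  have h3 : (u + 2 * n * τ).re = u₀.re + (u - u₀).re + n * (2 * τ.re) := by
    simp; ring
  have h4 : |(n : ℝ) * (2 * τ.re)| = |(n : ℝ)| * (2 * -τ.re) := by
    rw [abs_mul, abs_of_neg (by linarith : 2 * τ.re < 0)]; ring
  rw [h3]
  have h5 := abs_sub_abs_le_abs_sub ((n : ℝ) * (2 * τ.re)) (-(u₀.re + (u - u₀).re))
  have h6 := abs_add_le u₀.re (u - u₀).re
  rw [abs_neg, h4, sub_neg_eq_add, add_comm (_ * _)] at h5
  linarith

/-- The Lambert series `∑ (-1)^n exp (n w) Q^(3n(n+1)/2) / (1 - exp u Q^n)`, `Q = exp (2τ)`,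
in which a term with vanishing denominator is omitted. -/
noncomputable def lam (τ u w : ℂ) : ℂ :=
  ∑' n : ℤ, (-1 : ℂ) ^ n * cexp (n * w + 3 * n * (n + 1) * τ) / (1 - cexp (u + 2 * n * τ))

/-- The entire function that agrees with `jac τ u * lam τ u w` away from the poles. -/
noncomputable def jlam (τ u w : ℂ) : ℂ :=
  ∑' n : ℤ, cexp (n * (w + u) + (4 * n ^ 2 + 2 * n) * τ) * jacQuot τ (u + 2 * n * τ)

theorem jlam_term_eq {τ u w : ℂ} {n : ℤ} (h : cexp (u + 2 * n * τ) ≠ 1) :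
    cexp (n * (w + u) + (4 * n ^ 2 + 2 * n) * τ) * jacQuot τ (u + 2 * n * τ) =
      jac τ u * ((-1 : ℂ) ^ n * cexp (n * w + 3 * n * (n + 1) * τ) /
        (1 - cexp (u + 2 * n * τ))) := by
  rw [jacQuot_of_ne h, jac_shift,
    show n * (w + u) + (4 * n ^ 2 + 2 * n) * τ =
      (n * w + 3 * n * (n + 1) * τ) + -(-n * u - n * (n - 1) * τ) by ring,
    Complex.exp_add, Complex.exp_neg (-n * u - n * (n - 1) * τ)]
  have := Complex.exp_ne_zero (-n * u - n * (n - 1) * τ)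
  field_simp

theorem summable_lam_bound {τ : ℂ} (hτ : τ.re < 0) (w : ℂ) :
    Summable fun n : ℤ => ‖cexp (n * w + 3 * n * (n + 1) * τ)‖ := by
  have : (3 * τ).re < 0 := by simp; linarith
  refine (summable_theta this (w + 3 * τ)).norm.congr fun n => ?_
  rw [norm_mul, norm_neg_one_zpow, one_mul]
  congr 2; ring

theorem differentiable_jlam_term {τ : ℂ} (hτ : τ.re < 0) (w : ℂ) (n : ℤ) :
    Differentiable ℂ fun u =>
      cexp (n * (w + u) + (4 * n ^ 2 + 2 * n) * τ) * jacQuot τ (u + 2 * n * τ) :=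
  .mul (by fun_prop) ((differentiable_jacQuot hτ).comp
    (by fun_prop : Differentiable ℂ fun u : ℂ => u + 2 * n * τ))

theorem jlam_term_bound {τ : ℂ} (hτ : τ.re < 0) (w u₀ : ℂ) :
    ∃ v : ℤ → ℝ, Summable v ∧ ∀ᶠ n : ℤ in cofinite, ∀ u ∈ Metric.ball u₀ 1,
      ‖cexp (n * (w + u) + (4 * n ^ 2 + 2 * n) * τ) * jacQuot τ (u + 2 * n * τ)‖ ≤ v n := by
  obtain ⟨C, hC⟩ := (isCompact_closedBall u₀ 1).exists_bound_of_continuousOn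
    (differentiable_jac hτ).continuous.continuousOn
  refine ⟨_, (summable_lam_bound hτ w).mul_left (C * 2), ?_⟩
  filter_upwards [eventually_half_le_norm hτ u₀] with n hn u hu
  have h := hn u hu
  have hC' := hC u (Metric.ball_subset_closedBall hu)
  have h1 : cexp (u + 2 * n * τ) ≠ 1 := by
    intro h1
    rw [h1, sub_self, norm_zero] at h
    linarith
  rw [jlam_term_eq h1, norm_mul, norm_div, norm_mul, norm_neg_one_zpow, one_mul, div_eq_inv_mul,
    ← mul_assoc]
  gcongr
  · exact (norm_nonneg _).trans hC'
  · rw [inv_le_comm₀ (by linarith) (by norm_num)]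
    linarith

theorem summable_jlam {τ : ℂ} (hτ : τ.re < 0) (u w : ℂ) : Summable fun n : ℤ =>
    cexp (n * (w + u) + (4 * n ^ 2 + 2 * n) * τ) * jacQuot τ (u + 2 * n * τ) := by
  obtain ⟨v, hv, hb⟩ := jlam_term_bound hτ w u
  refine Summable.of_norm_bounded_eventually hv ?_
  filter_upwards [hb] with n hn
  exact hn u (Metric.mem_ball_self one_pos)

theorem differentiable_jlam {τ : ℂ} (hτ : τ.re < 0) (w : ℂ) :
    Differentiable ℂ fun u => jlam τ u w := by
  intro u₀
  obtain ⟨v, hv, hb⟩ := jlam_term_bound hτ w u₀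
  exact differentiableAt_tsum_of_eventually (differentiable_jlam_term hτ w) hv hb

theorem jlam_eq {τ u : ℂ} (h : ∀ n : ℤ, cexp (u + 2 * n * τ) ≠ 1) (w : ℂ) :
    jlam τ u w = jac τ u * lam τ u w := by
  unfold jlam lam
  rw [← tsum_mul_left]
  exact tsum_congr fun n => jlam_term_eq (h n)

theorem exp_two_mul_ne_one {τ : ℂ} (hτ : τ.re < 0) {n : ℤ} (hn : n ≠ 0) :
    cexp (2 * n * τ) ≠ 1 := by
  intro h
  have h1 := congrArg norm h
  rw [norm_exp, norm_one, Real.exp_eq_one_iff] at h1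
  have h2 : (2 * (n : ℂ) * τ).re = 2 * n * τ.re := by simp
  rw [h2] at h1
  have : (n : ℝ) ≠ 0 := by exact_mod_cast hn
  have := mul_ne_zero (mul_ne_zero two_ne_zero this) hτ.ne
  exact this h1

theorem jlam_zero {τ : ℂ} (hτ : τ.re < 0) (w : ℂ) : jlam τ 0 w = jacQuot τ 0 := by
  unfold jlam
  rw [tsum_eq_single 0]
  · simp
  · intro n hn
    have h := exp_two_mul_ne_one hτ hn
    rw [jlam_term_eq (by rwa [zero_add]), jac_zero, zero_mul]

theorem deriv_jlam_zero {τ : ℂ} (hτ : τ.re < 0) (w : ℂ) :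
    deriv (fun u => jlam τ u w) 0 = deriv (jac τ) 0 * lam τ 0 w := by
  obtain ⟨v, hv, hb⟩ := jlam_term_bound hτ w 0
  have h := hasSum_deriv_of_eventually (differentiable_jlam_term hτ w) hv hb
  refine h.tsum_eq.symm.trans ?_
  unfold lam
  rw [← tsum_mul_left]
  refine tsum_congr fun n => ?_
  rcases eq_or_ne n 0 with rfl | hn
  · simp [deriv_jacQuot_zero hτ]
  · have h1 : cexp (0 + 2 * n * τ) ≠ 1 := by rw [zero_add]; exact exp_two_mul_ne_one hτ hn
    have h2 : ∀ᶠ u in 𝓝 (0 : ℂ), cexp (u + 2 * n * τ) ≠ 1 :=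
      ContinuousAt.eventually_ne (g := fun u : ℂ => cexp (u + 2 * n * τ)) (by fun_prop) h1
    have h3 : (fun u =>
        cexp (n * (w + u) + (4 * n ^ 2 + 2 * n) * τ) * jacQuot τ (u + 2 * n * τ)) =ᶠ[𝓝 0]
        fun u => jac τ u * ((-1 : ℂ) ^ n * cexp (n * w + 3 * n * (n + 1) * τ) /
          (1 - cexp (u + 2 * n * τ))) := by
      filter_upwards [h2] with u hu using jlam_term_eq hu
    have h4 : DifferentiableAt ℂ (fun u => (-1 : ℂ) ^ n * cexp (n * w + 3 * n * (n + 1) * τ) /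
          (1 - cexp (u + 2 * n * τ))) 0 :=
      DifferentiableAt.div (by fun_prop) (by fun_prop) (sub_ne_zero.2 h1.symm)
    rw [h3.deriv_eq, deriv_fun_mul (differentiable_jac hτ 0) h4, jac_zero, zero_mul, add_zero]

theorem jlam_periodic (τ u w : ℂ) : jlam τ (u + 2 * Real.pi * I) w = jlam τ u w := by
  unfold jlam
  refine tsum_congr fun n => ?_
  congr 1
  · rw [Complex.exp_eq_exp_iff_exists_int]
    exact ⟨n, by ring⟩
  · have hd : deriv (jac τ) (u + 2 * Real.pi * I + 2 * n * τ) =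
        deriv (jac τ) (u + 2 * n * τ) := by
      rw [show u + 2 * Real.pi * I + 2 * n * τ = u + 2 * n * τ + 2 * Real.pi * I by ring,
        ← deriv_comp_add_const]
      congr 1
      funext v
      simpa using jac_periodic τ v 1
    have hj : jac τ (u + 2 * Real.pi * I + 2 * n * τ) = jac τ (u + 2 * n * τ) := by
      rw [show u + 2 * Real.pi * I + 2 * n * τ = u + 2 * n * τ + (1 : ℤ) * (2 * Real.pi * I) by
        push_cast; ring, jac_periodic]
    have he : cexp (u + 2 * Real.pi * I + 2 * n * τ) = cexp (u + 2 * n * τ) := by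
      rw [show u + 2 * Real.pi * I + 2 * n * τ = u + 2 * n * τ + 2 * Real.pi * I by ring,
        Complex.exp_add, Complex.exp_two_pi_mul_I, mul_one]
    simp only [jacQuot, removableQuotient, deriv_one_sub_exp, hd, hj, he]

theorem jlam_add_two_mul_shift (τ u w : ℂ) :
    jlam τ (u + 2 * τ) w = cexp (-u - w) * jlam τ u (w - 6 * τ) := by
  unfold jlam
  rw [← (Equiv.subRight (1 : ℤ)).tsum_eq, ← tsum_mul_left]
  refine tsum_congr fun n => ?_
  simp only [Equiv.subRight_apply, Int.cast_sub, Int.cast_one]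
  rw [← mul_assoc, ← Complex.exp_add]
  congr 2 <;> ring

theorem lam_add_two_mul_shift (τ u w : ℂ) :
    lam τ (u + 2 * τ) w = -cexp (-w) * lam τ u (w - 6 * τ) := by
  unfold lam
  rw [← (Equiv.subRight (1 : ℤ)).tsum_eq, ← tsum_mul_left]
  refine tsum_congr fun n => ?_
  simp only [Equiv.subRight_apply, Int.cast_sub, Int.cast_one]
  rw [zpow_sub₀ (by norm_num), ← mul_div_assoc, ← mul_assoc, mul_right_comm (-cexp (-w)),
    neg_mul, ← Complex.exp_add]
  congr 1
  · rw [zpow_one, div_neg, div_one, neg_mul, neg_mul, mul_comm]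
    congr 3
    ring
  · congr 2; ring

theorem jlam_add_two_mul {τ : ℂ} (hτ : τ.re < 0) (u w : ℂ) :
    jlam τ (u + 2 * τ) w = cexp (2 * u - w) * jlam τ u w + jac τ u * cexp (-w - u) *
      (theta (3 * τ) (w - 3 * τ) + cexp u * theta (3 * τ) (w - τ) +
        cexp (2 * u) * theta (3 * τ) (-w - τ)) := by
  have h3 : (3 * τ).re < 0 := by simp; linarith
  rw [show -w - τ = -(w + τ) by ring, theta_neg, jlam_add_two_mul_shift]
  have key : jlam τ u (w - 6 * τ) = cexp (3 * u) * jlam τ u w + jac τ u *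
      (theta (3 * τ) (w - 3 * τ) + cexp u * theta (3 * τ) (w - τ) +
        cexp (2 * u) * theta (3 * τ) (w + τ)) := by
    have hs : ∀ b, HasSum (fun n : ℤ => (-1 : ℂ) ^ n * cexp (3 * τ * n ^ 2 + b * n))
        (theta (3 * τ) b) := fun b => (summable_theta h3 b).hasSum
    refine HasSum.tsum_eq ((((summable_jlam hτ u w).hasSum.mul_left _).add
      ((((hs _).add ((hs _).mul_left _)).add ((hs _).mul_left _)).mul_left _)).congr_fun
      fun n => ?_)
    have hk := one_sub_exp_mul_jacQuot τ (u + 2 * n * τ)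
    rw [jac_shift] at hk
    have hE : ∀ a b : ℂ, cexp (a + b) = cexp a * cexp b := Complex.exp_add
    set K := jacQuot τ (u + 2 * n * τ)
    set J := jac τ u
    set x := cexp (u + 2 * n * τ) with hx
    set A := cexp (n * (w + u) + (4 * n ^ 2 + 2 * n) * τ) with hA
    have e1 : cexp (n * (w - 6 * τ + u) + (4 * n ^ 2 + 2 * n) * τ) = A * cexp (-6 * n * τ) := by
      rw [hA, ← hE]; congr 1; ring
    have e2 : cexp (3 * u) = x ^ 3 * cexp (-6 * n * τ) := by
      rw [hx, ← Complex.exp_nat_mul, ← hE]; congr 1; push_cast; ring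
    set B := cexp (-n * u - n * (n - 1) * τ) with hB
    have e3 : cexp (3 * τ * n ^ 2 + (w - 3 * τ) * n) = A * cexp (-6 * n * τ) * B := by
      rw [hA, hB, ← hE, ← hE]; congr 1; ring
    have e4 : cexp u * cexp (3 * τ * n ^ 2 + (w - τ) * n) = A * cexp (-6 * n * τ) * B * x := by
      rw [hA, hB, hx, ← hE, ← hE, ← hE, ← hE]; congr 1; ring
    have e5 : cexp (2 * u) * cexp (3 * τ * n ^ 2 + (w + τ) * n) =
        A * cexp (-6 * n * τ) * B * x ^ 2 := by
      rw [hA, hB, hx, ← Complex.exp_nat_mul, ← hE, ← hE, ← hE, ← hE]; congr 1; push_cast; ring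
    rw [e1, e2]
    linear_combination (A * cexp (-6 * n * τ) * (1 + x + x ^ 2)) * hk -
      J * (-1) ^ n * (e3 + e4 + e5)
  rw [key, mul_add, ← mul_assoc, ← Complex.exp_add, show -u - w + 3 * u = 2 * u - w by ring,
    show -u - w = -w - u by ring]
  ring

theorem exp_ne_one_of_jac_ne_zero {τ u : ℂ} (h : jac τ u ≠ 0) (n : ℤ) :
    cexp (u + 2 * n * τ) ≠ 1 := by
  intro h1
  have h2 := jac_eq_zero_of_exp_eq_one (τ := τ) h1
  rw [jac_shift] at h2
  exact mul_ne_zero (mul_ne_zero (zpow_ne_zero _ (by norm_num)) (Complex.exp_ne_zero _)) h h2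

theorem jlam_eq_of_ne_zero {τ u : ℂ} (h : jac τ u ≠ 0) (w : ℂ) :
    jlam τ u w = jac τ u * lam τ u w :=
  jlam_eq (exp_ne_one_of_jac_ne_zero h) w

/-! ### The Lambert series identity -/

/-- The multiplier in the three-term Lambert series identity. -/
noncomputable def lamCoeff (τ s : ℂ) : ℂ :=
  (cexp (2 * s) * theta (3 * τ) (-3 * s - τ) + cexp s * theta (3 * τ) (3 * s - τ)) /
    theta (3 * τ) (-τ)

/-- A combination of three Lambert series, cleared of denominators. -/
noncomputable def lamComb (τ s u : ℂ) : ℂ :=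
  jac τ u * jac τ (u + s) * jlam τ (u - s) (-3 * s) +
    cexp (3 * s) * (jac τ u * jac τ (u - s) * jlam τ (u + s) (3 * s)) -
    lamCoeff τ s * (jac τ (u - s) * jac τ (u + s) * jlam τ u 0)

theorem theta_three_zero (τ w : ℂ) :
    theta (3 * τ) (w - 3 * τ) = -cexp w * theta (3 * τ) (-w - 3 * τ) := by
  rw [← theta_neg (3 * τ) (w - 3 * τ),
    show -(w - 3 * τ) = (-w - 3 * τ) + 2 * (3 * τ) by ring, theta_add_two_mul]
  congr 3; ring

theorem lamComb_add_two_mul {τ : ℂ} (hτ : τ.re < 0) (h0 : theta (3 * τ) (-τ) ≠ 0) (s u : ℂ) :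
    lamComb τ s (u + 2 * τ) = lamComb τ s u := by
  have hc : lamCoeff τ s * theta (3 * τ) (-τ) =
    cexp (2 * s) * theta (3 * τ) (-3 * s - τ) + cexp s * theta (3 * τ) (3 * s - τ) :=
    div_mul_cancel₀ _ h0
  have hz : theta (3 * τ) (-(3 * τ)) = 0 := by
    have := theta_three_zero τ 0
    simp only [zero_sub, neg_zero, Complex.exp_zero] at this
    linear_combination this / 2
  have hz' := theta_three_zero τ (3 * s)
  unfold lamComb
  rw [show u + 2 * τ + s = (u + s) + 2 * τ by ring, show u + 2 * τ - s = (u - s) + 2 * τ by ring,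
    jac_add_two_mul, jac_add_two_mul, jac_add_two_mul, jlam_add_two_mul hτ, jlam_add_two_mul hτ,
    jlam_add_two_mul hτ]
  simp only [neg_zero, zero_sub, sub_zero, hz, zero_add]
  rw [show -(-3 * s) - τ = 3 * s - τ by ring, show -(3 * s) - τ = -3 * s - τ by ring]
  rw [show -(3 * s) - 3 * τ = -3 * s - 3 * τ by ring] at hz'
  set x := cexp u with hx
  set σ := cexp s with hσ
  have hx0 : x ≠ 0 := Complex.exp_ne_zero _
  have hσ0 : σ ≠ 0 := Complex.exp_ne_zero _
  have hE : ∀ (a b : ℤ) (z : ℂ), z = a * u + b * s → cexp z = x ^ a * σ ^ b :=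
    fun a b z hz => by rw [hz, Complex.exp_add, Complex.exp_int_mul, Complex.exp_int_mul]
  have e1 : cexp (-u) = x⁻¹ := Complex.exp_neg _
  have e2 : cexp (-(u + s)) = x⁻¹ * σ⁻¹ :=
    (hE (-1) (-1) _ (by push_cast; ring)).trans (by simp [zpow_ofNat])
  have e3 : cexp (-(u - s)) = x⁻¹ * σ :=
    (hE (-1) 1 _ (by push_cast; ring)).trans (by simp [zpow_ofNat])
  have e4 : cexp (2 * (u - s) - -3 * s) = x ^ 2 * σ :=
    (hE 2 1 _ (by push_cast; ring)).trans (by simp [zpow_ofNat])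
  have e5 : cexp (-(-3 * s) - (u - s)) = x⁻¹ * σ ^ 4 :=
    (hE (-1) 4 _ (by push_cast; ring)).trans (by simp [zpow_ofNat])
  have e6 : cexp (u - s) = x * σ⁻¹ :=
    (hE 1 (-1) _ (by push_cast; ring)).trans (by simp [zpow_ofNat])
  have e7 : cexp (2 * (u - s)) = x ^ 2 * (σ ^ 2)⁻¹ :=
    (hE 2 (-2) _ (by push_cast; ring)).trans (by simp [zpow_ofNat])
  have e8 : cexp (3 * s) = σ ^ 3 :=
    (hE 0 3 _ (by push_cast; ring)).trans (by simp [zpow_ofNat])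
  have e9 : cexp (2 * (u + s) - 3 * s) = x ^ 2 * σ⁻¹ :=
    (hE 2 (-1) _ (by push_cast; ring)).trans (by simp [zpow_ofNat])
  have e10 : cexp (-(3 * s) - (u + s)) = x⁻¹ * (σ ^ 4)⁻¹ :=
    (hE (-1) (-4) _ (by push_cast; ring)).trans (by simp [zpow_ofNat])
  have e11 : cexp (u + s) = x * σ :=
    (hE 1 1 _ (by push_cast; ring)).trans (by simp [zpow_ofNat])
  have e12 : cexp (2 * (u + s)) = x ^ 2 * σ ^ 2 :=
    (hE 2 2 _ (by push_cast; ring)).trans (by simp [zpow_ofNat])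
  have e13 : cexp (2 * u) = x ^ 2 :=
    (hE 2 0 _ (by push_cast; ring)).trans (by simp [zpow_ofNat])
  have e14 : cexp (2 * s) = σ ^ 2 :=
    (hE 0 2 _ (by push_cast; ring)).trans (by simp [zpow_ofNat])
  rw [e8] at hz'
  rw [e14] at hc
  simp only [e1, e2, e3, e4, e5, e6, e7, e8, e9, e10, e11, e12, e13, hz']
  generalize theta (3 * τ) (-3 * s - 3 * τ) = t0 at *
  generalize theta (3 * τ) (-3 * s - τ) = t1 at *
  generalize theta (3 * τ) (3 * s - τ) = t2 at *
  generalize theta (3 * τ) (-τ) = t3 at *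
  generalize jac τ u = j0 at *
  generalize jac τ (u + s) = j1 at *
  generalize jac τ (u - s) = j2 at *
  generalize jlam τ u 0 = l0 at *
  generalize jlam τ (u + s) (3 * s) = l1 at *
  generalize jlam τ (u - s) (-3 * s) = l2 at *
  generalize lamCoeff τ s = c at *
  field_simp
  linear_combination (-(j0 * j1 * j2 * x * (1 + x))) * hc

theorem differentiable_lamComb {τ : ℂ} (hτ : τ.re < 0) (s : ℂ) :
    Differentiable ℂ (lamComb τ s) := by
  have hj := differentiable_jac hτ
  have hl := differentiable_jlam hτ
  have h1 : Differentiable ℂ fun u => jac τ (u + s) :=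
    hj.comp (by fun_prop : Differentiable ℂ fun u : ℂ => u + s)
  have h2 : Differentiable ℂ fun u => jac τ (u - s) :=
    hj.comp (by fun_prop : Differentiable ℂ fun u : ℂ => u - s)
  have h3 : Differentiable ℂ fun u => jlam τ (u + s) (3 * s) :=
    (hl (3 * s)).comp (by fun_prop : Differentiable ℂ fun u : ℂ => u + s)
  have h4 : Differentiable ℂ fun u => jlam τ (u - s) (-3 * s) :=
    (hl (-3 * s)).comp (by fun_prop : Differentiable ℂ fun u : ℂ => u - s)
  exact (((hj.mul h1).mul h4).add (((hj.mul h2).mul h3).const_mul _)).sub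
    (((h2.mul h1).mul (hl 0)).const_mul _)

theorem lamComb_eq {τ : ℂ} (hτ : τ.re < 0) (h0 : theta (3 * τ) (-τ) ≠ 0) (s u v : ℂ) :
    lamComb τ s u = lamComb τ s v := by
  refine eq_of_doubly_periodic (differentiable_lamComb hτ s) hτ (lamComb_add_two_mul hτ h0 s)
    (fun u => ?_) u v
  have hj : ∀ v, jac τ (v + 2 * Real.pi * I) = jac τ v := fun v => by
    simpa using jac_periodic τ v 1
  unfold lamComb
  rw [show u + 2 * Real.pi * I + s = (u + s) + 2 * Real.pi * I by ring,
    show u + 2 * Real.pi * I - s = (u - s) + 2 * Real.pi * I by ring]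
  simp only [hj, jlam_periodic]

theorem lamComb_self {τ : ℂ} (hτ : τ.re < 0) (s : ℂ) :
    lamComb τ s s = jac τ s * jac τ (2 * s) * jacQuot τ 0 := by
  unfold lamComb
  rw [sub_self, jac_zero, jlam_zero hτ, ← two_mul]
  ring

theorem lamCoeff_eq {τ : ℂ} (hτ : τ.re < 0) (h0 : theta (3 * τ) (-τ) ≠ 0)
    (hκ : jacQuot τ 0 ≠ 0) {s : ℂ} (hs : jac τ s ≠ 0) :
    lamCoeff τ s = cexp s * jac τ (2 * s) / jac τ s := by
  have h := lamComb_eq hτ h0 s 0 s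
  rw [lamComb_self hτ] at h
  unfold lamComb at h
  rw [jac_zero, zero_sub, zero_add, jac_neg, jlam_zero hτ, Complex.exp_neg] at h
  have := Complex.exp_ne_zero s
  rw [eq_div_iff hs]
  apply mul_left_cancel₀ (mul_ne_zero hκ hs)
  linear_combination cexp s * h - lamCoeff τ s * jac τ s ^ 2 * jacQuot τ 0 *
    mul_inv_cancel₀ this

theorem lam_identity {τ : ℂ} (hτ : τ.re < 0) (h0 : theta (3 * τ) (-τ) ≠ 0) {s u : ℂ}
    (h1 : jac τ u ≠ 0) (h2 : jac τ (u + s) ≠ 0) (h3 : jac τ (u - s) ≠ 0) :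
    lam τ (u - s) (-3 * s) + cexp (3 * s) * lam τ (u + s) (3 * s) - lamCoeff τ s * lam τ u 0 =
      jacQuot τ 0 * jac τ s * jac τ (2 * s) / (jac τ u * jac τ (u + s) * jac τ (u - s)) := by
  have h := lamComb_eq hτ h0 s u s
  rw [lamComb_self hτ] at h
  unfold lamComb at h
  rw [jlam_eq_of_ne_zero h1, jlam_eq_of_ne_zero h2, jlam_eq_of_ne_zero h3] at h
  rw [eq_div_iff (by positivity)]
  linear_combination h

theorem deriv_lamComb {τ : ℂ} (hτ : τ.re < 0) (h0 : theta (3 * τ) (-τ) ≠ 0) (s u : ℂ) :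
    ((deriv (jac τ) u * jac τ (u + s) + jac τ u * deriv (jac τ) (u + s)) *
        jlam τ (u - s) (-3 * s) +
      jac τ u * jac τ (u + s) * deriv (fun v => jlam τ v (-3 * s)) (u - s)) +
    cexp (3 * s) * ((deriv (jac τ) u * jac τ (u - s) + jac τ u * deriv (jac τ) (u - s)) *
        jlam τ (u + s) (3 * s) +
      jac τ u * jac τ (u - s) * deriv (fun v => jlam τ v (3 * s)) (u + s)) -
    lamCoeff τ s * ((deriv (jac τ) (u - s) * jac τ (u + s) +
        jac τ (u - s) * deriv (jac τ) (u + s)) * jlam τ u 0 +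
      jac τ (u - s) * jac τ (u + s) * deriv (fun v => jlam τ v 0) u) = 0 := by
  have hj := fun v => (differentiable_jac hτ v).hasDerivAt
  have hl := fun w v => (differentiable_jlam hτ w v).hasDerivAt
  have h1 := (hj (u + s)).comp_add_const u s
  have h2 := (hj (u - s)).comp_sub_const u s
  have h3 := (hl (3 * s) (u + s)).comp_add_const u s
  have h4 := (hl (-3 * s) (u - s)).comp_sub_const u s
  have h := ((((hj u).mul h1).mul h4).add ((((hj u).mul h2).mul h3).const_mul (cexp (3 * s)))).sub
    (((h2.mul h1).mul (hl 0 u)).const_mul (lamCoeff τ s))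
  have hc : lamComb τ s = fun _ => lamComb τ s 0 := funext fun v => lamComb_eq hτ h0 s v 0
  have h' : HasDerivAt (lamComb τ s) _ u := h
  rw [hc] at h'
  exact h'.unique (hasDerivAt_const u _)

theorem lam_identity_pole {τ : ℂ} (hτ : τ.re < 0) (h0 : theta (3 * τ) (-τ) ≠ 0)
    (hκ : jacQuot τ 0 ≠ 0) {s : ℂ} (h1 : jac τ s ≠ 0) (h2 : jac τ (2 * s) ≠ 0) :
    lam τ 0 (-3 * s) + cexp (3 * s) * lam τ (2 * s) (3 * s) - lamCoeff τ s * lam τ s 0 =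
      logDeriv (jac τ) s + logDeriv (jac τ) (2 * s) := by
  have h := deriv_lamComb hτ h0 s s
  rw [sub_self, ← two_mul, jlam_zero hτ, deriv_jlam_zero hτ, jac_zero, jlam_eq_of_ne_zero h1,
    jlam_eq_of_ne_zero h2, show deriv (jac τ) 0 = -jacQuot τ 0 by rw [jacQuot_zero, neg_neg]] at h
  rw [logDeriv_apply, logDeriv_apply, div_add_div _ _ h1 h2, eq_div_iff (mul_ne_zero h1 h2)]
  apply mul_left_cancel₀ hκ
  linear_combination -h

theorem jac_two_mul_sub (τ u : ℂ) : jac τ (2 * τ - u) = jac τ u := by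
  rw [show 2 * τ - u = -u + 2 * τ by ring, jac_add_two_mul, jac_neg, neg_neg, Complex.exp_neg]
  have := Complex.exp_ne_zero u
  field_simp

theorem logDeriv_jac_add {τ : ℂ} (hτ : τ.re < 0) {u : ℂ} (hu : jac τ u ≠ 0) :
    logDeriv (jac τ) (u + 2 * τ) = logDeriv (jac τ) u - 1 := by
  have := Complex.exp_ne_zero (-u)
  rw [logDeriv_apply, logDeriv_apply, deriv_jac_add hτ, jac_add_two_mul]
  field_simp
  ring

theorem logDeriv_jac_two_mul_sub (τ u : ℂ) :
    logDeriv (jac τ) (2 * τ - u) = -logDeriv (jac τ) u := by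
  have h : deriv (jac τ) (2 * τ - u) = -deriv (jac τ) u := by
    have := deriv_comp_const_sub (2 * τ) (f := jac τ) u
    simp only [jac_two_mul_sub] at this
    rw [this, neg_neg]
  rw [logDeriv_apply, logDeriv_apply, h, jac_two_mul_sub, neg_div]

theorem jlam_two_mul {τ : ℂ} (hτ : τ.re < 0) (w : ℂ) :
    jlam τ (2 * τ) w = cexp (-w) * jacQuot τ 0 := by
  rw [← zero_add (2 * τ), jlam_add_two_mul_shift, jlam_zero hτ, neg_zero, zero_sub]

theorem deriv_jlam_two_mul {τ : ℂ} (hτ : τ.re < 0) (w : ℂ) :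
    deriv (fun u => jlam τ u w) (2 * τ) =
      -cexp (-w) * jacQuot τ 0 + jacQuot τ 0 * lam τ (2 * τ) w := by
  have h1 : HasDerivAt (fun v => cexp (-v - w)) (cexp (-0 - w) * -1) 0 :=
    ((hasDerivAt_neg (0 : ℂ)).sub_const w).cexp
  have h2 := h1.mul (differentiable_jlam hτ (w - 6 * τ) 0).hasDerivAt
  have h3 : (fun v => cexp (-v - w)) * (fun u => jlam τ u (w - 6 * τ)) =
      fun v => jlam τ (v + 2 * τ) w := funext fun v => (jlam_add_two_mul_shift τ v w).symm
  rw [h3] at h2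
  have h4 := h2.deriv
  rw [deriv_comp_add_const (fun u => jlam τ u w), zero_add, jlam_zero hτ, deriv_jlam_zero hτ] at h4
  rw [h4, show lam τ (2 * τ) w = _ by rw [← zero_add (2 * τ), lam_add_two_mul_shift],
    show deriv (jac τ) 0 = -jacQuot τ 0 by rw [jacQuot_zero, neg_neg]]
  simp only [neg_zero, zero_sub]
  ring

theorem lam_identity_pole' {τ : ℂ} (hτ : τ.re < 0) (h0 : theta (3 * τ) (-τ) ≠ 0)
    (hκ : jacQuot τ 0 ≠ 0) {s : ℂ} (h1 : jac τ s ≠ 0) (h2 : jac τ (2 * s) ≠ 0) :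
    lam τ (2 * τ - 2 * s) (-3 * s) + cexp (3 * s) * lam τ (2 * τ) (3 * s) -
      lamCoeff τ s * lam τ (2 * τ - s) 0 =
      1 + logDeriv (jac τ) s + logDeriv (jac τ) (2 * s) := by
  have h := deriv_lamComb hτ h0 s (2 * τ - s)
  have hd : deriv (jac τ) (2 * τ) = jacQuot τ 0 := by
    rw [← zero_add (2 * τ), deriv_jac_add hτ, jac_zero, jacQuot_zero]
    simp
  have hz : jac τ (2 * τ) = 0 := by rw [← sub_zero (2 * τ), jac_two_mul_sub, jac_zero]
  have h1' : jac τ (2 * τ - s) ≠ 0 := by rwa [jac_two_mul_sub]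
  have h2' : jac τ (2 * τ - 2 * s) ≠ 0 := by rwa [jac_two_mul_sub]
  rw [sub_add_cancel, show 2 * τ - s - s = 2 * τ - 2 * s by ring, jlam_two_mul hτ,
    deriv_jlam_two_mul hτ, hd, hz, jlam_eq_of_ne_zero h1', jlam_eq_of_ne_zero h2'] at h
  have e1 := logDeriv_jac_two_mul_sub τ s
  have e2 := logDeriv_jac_two_mul_sub τ (2 * s)
  rw [logDeriv_apply, div_eq_iff h1'] at e1
  rw [logDeriv_apply, div_eq_iff h2'] at e2
  have e3 : cexp (3 * s) * cexp (-(3 * s)) = 1 := by rw [← Complex.exp_add]; simp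
  rw [e1, e2] at h
  apply mul_left_cancel₀ (mul_ne_zero hκ (mul_ne_zero h1' h2'))
  linear_combination h + jacQuot τ 0 * jac τ (2 * τ - s) * jac τ (2 * τ - 2 * s) *
    (1 + logDeriv (jac τ) s + logDeriv (jac τ) (2 * s)) * e3

/-! ### The three-term relation and logarithmic derivatives -/

/-- The theta series `∑ exp (a n² + b n)`. -/
noncomputable def thetaPos (a b : ℂ) : ℂ := ∑' n : ℤ, cexp (a * n ^ 2 + b * n)

theorem summable_norm_thetaPos {a : ℂ} (ha : a.re < 0) (b : ℂ) :
    Summable fun n : ℤ => ‖cexp (a * n ^ 2 + b * n)‖ :=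
  (summable_theta ha b).norm.congr fun n => by rw [norm_mul, norm_neg_one_zpow, one_mul]

theorem thetaPos_shift (a b : ℂ) : thetaPos a b = cexp (a + b) * thetaPos a (b + 2 * a) := by
  unfold thetaPos
  rw [← (Equiv.addRight (1 : ℤ)).tsum_eq, ← tsum_mul_left]
  refine tsum_congr fun n => ?_
  simp only [Equiv.coe_addRight, Int.cast_add, Int.cast_one]
  rw [← Complex.exp_add]
  congr 1
  ring

/-- Pairs of integers, split according to the parity of their sum. -/
theorem bijective_parity : Function.Bijective
    (Sum.elim (fun p : ℤ × ℤ => (p.1 + p.2, p.1 - p.2))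
      (fun p : ℤ × ℤ => (p.1 + p.2 + 1, p.1 - p.2))) := by
  constructor
  · rintro (⟨s, t⟩ | ⟨s, t⟩) (⟨s', t'⟩ | ⟨s', t'⟩) h <;>
      simp only [Sum.elim_inl, Sum.elim_inr, Prod.mk.injEq, Sum.inl.injEq, Sum.inr.injEq,
        reduceCtorEq] at h ⊢ <;> omega
  · rintro ⟨n, m⟩
    rcases Int.emod_two_eq_zero_or_one (n + m) with h | h
    · exact ⟨.inl ((n + m) / 2, (n - m) / 2), by
        simp only [Sum.elim_inl, Prod.mk.injEq]; omega⟩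
    · exact ⟨.inr ((n + m) / 2, (n - m) / 2), by
        simp only [Sum.elim_inr, Prod.mk.injEq]; omega⟩

theorem hasSum_parity {f : ℤ × ℤ → ℂ} {a b : ℂ}
    (h₁ : HasSum (fun p : ℤ × ℤ => f (p.1 + p.2, p.1 - p.2)) a)
    (h₂ : HasSum (fun p : ℤ × ℤ => f (p.1 + p.2 + 1, p.1 - p.2)) b) : HasSum f (a + b) := by
  rw [← (Equiv.ofBijective _ bijective_parity).hasSum_iff]
  exact HasSum.sum h₁ h₂

theorem hasSum_mul_of_summable_norm {f g : ℤ → ℂ} {a b : ℂ} (hf : HasSum f a) (hg : HasSum g b)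
    (hf' : Summable fun n => ‖f n‖) (hg' : Summable fun n => ‖g n‖) :
    HasSum (fun p : ℤ × ℤ => f p.1 * g p.2) (a * b) :=
  hf.mul hg (summable_mul_of_summable_norm hf' hg')

theorem jac_mul_jac {τ : ℂ} (hτ : τ.re < 0) (a b : ℂ) :
    jac τ (a + b) * jac τ (a - b) = cexp a *
      ((cexp a * thetaPos (2 * τ) (2 * a + 2 * τ)) * thetaPos (2 * τ) (2 * b) -
        thetaPos (2 * τ) (2 * a) * (cexp b * thetaPos (2 * τ) (2 * b + 2 * τ))) := by
  have h2 : (2 * τ).re < 0 := by simp; linarith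
  have hp : ∀ b, HasSum (fun n : ℤ => cexp (2 * τ * n ^ 2 + b * n)) (thetaPos (2 * τ) b) :=
    fun b => (Summable.of_norm (summable_norm_thetaPos h2 b)).hasSum
  have hprod : ∀ b c, HasSum (fun p : ℤ × ℤ =>
      cexp (2 * τ * p.1 ^ 2 + b * p.1) * cexp (2 * τ * p.2 ^ 2 + c * p.2))
      (thetaPos (2 * τ) b * thetaPos (2 * τ) c) := fun b c => by
    have h := hasSum_mul_of_summable_norm (hp b) (hp c)
      (summable_norm_thetaPos h2 b) (summable_norm_thetaPos h2 c)
    exact h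
  have hj' : ∀ u, HasSum (fun n : ℤ => (-1 : ℂ) ^ n * cexp (τ * n ^ 2 + (u - τ) * n))
      (jac τ u) := fun u => (summable_theta hτ (u - τ)).hasSum
  have hj : HasSum (fun p : ℤ × ℤ =>
      ((-1 : ℂ) ^ p.1 * cexp (τ * p.1 ^ 2 + (a + b - τ) * p.1)) *
        ((-1 : ℂ) ^ p.2 * cexp (τ * p.2 ^ 2 + (a - b - τ) * p.2)))
      (jac τ (a + b) * jac τ (a - b)) := by
    have h := hasSum_mul_of_summable_norm (hj' (a + b)) (hj' (a - b))
      (summable_theta hτ (a + b - τ)).norm (summable_theta hτ (a - b - τ)).norm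
    exact h
  have hE : ∀ a b : ℂ, cexp (a + b) = cexp a * cexp b := Complex.exp_add
  have hev : ∀ s t : ℤ, (-1 : ℂ) ^ (s + t) * (-1) ^ (s - t) = 1 := fun s t => by
    rw [← zpow_add₀ (by norm_num), show s + t + (s - t) = s + s by ring,
      zpow_add₀ (by norm_num), neg_one_zpow_mul_self]
  have hod : ∀ s t : ℤ, (-1 : ℂ) ^ (s + t + 1) * (-1) ^ (s - t) = -1 := fun s t => by
    rw [zpow_add₀ (by norm_num), mul_right_comm, hev]; simp
  have hr := hasSum_parity (f := fun p : ℤ × ℤ =>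
      ((-1 : ℂ) ^ p.1 * cexp (τ * p.1 ^ 2 + (a + b - τ) * p.1)) *
        ((-1 : ℂ) ^ p.2 * cexp (τ * p.2 ^ 2 + (a - b - τ) * p.2)))
    ((hprod (2 * a - 2 * τ) (2 * b)).congr_fun fun p => by
      dsimp only
      rw [mul_mul_mul_comm, hev, one_mul, ← hE, ← hE]
      congr 1
      push_cast
      ring)
    (((hprod (2 * a) (2 * b + 2 * τ)).mul_left (-(cexp a * cexp b))).congr_fun fun p => by
      dsimp only
      rw [mul_mul_mul_comm, hod, ← hE, ← hE, ← hE, neg_mul, neg_mul, one_mul, ← hE]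
      congr 2
      push_cast
      ring)
  rw [hj.unique hr, thetaPos_shift (2 * τ) (2 * a - 2 * τ),
    show 2 * τ + (2 * a - 2 * τ) = a + a by ring, hE,
    show 2 * a - 2 * τ + 2 * (2 * τ) = 2 * a + 2 * τ by ring]
  ring

theorem jac_three_term {τ : ℂ} (hτ : τ.re < 0) (a c d : ℂ) :
    jac τ a ^ 2 * (jac τ (c + d) * jac τ (c - d)) =
      jac τ (a + c) * jac τ (a - c) * (cexp c * (jac τ d * jac τ (-d))) +
      jac τ (a + d) * jac τ (a - d) * jac τ c ^ 2 := by
  have h : ∀ x y, jac τ (x + y) * jac τ (x - y) = _ := jac_mul_jac hτ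
  have h1 := h a 0
  have h2 := h 0 d
  have h3 := h c 0
  have h4 := h 0 c
  rw [add_zero, sub_zero, ← sq] at h1 h3
  rw [zero_add, zero_sub] at h2 h4
  rw [h1, h2, h3, h c d, h a c, h a d, Complex.exp_zero]
  ring

theorem jac_logDeriv {τ : ℂ} (hτ : τ.re < 0) {a c : ℂ} (hc : jac τ c ≠ 0)
    (h1 : jac τ (a + c) ≠ 0) (h2 : jac τ (a - c) ≠ 0) :
    jacQuot τ 0 * jac τ a ^ 2 * jac τ (2 * c) = jac τ (a + c) * jac τ (a - c) * jac τ c ^ 2 *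
      (1 - 2 * logDeriv (jac τ) c + logDeriv (jac τ) (a + c) - logDeriv (jac τ) (a - c)) := by
  have hj := fun v => (differentiable_jac hτ v).hasDerivAt
  have hadd : ∀ x : ℂ, HasDerivAt (fun d => jac τ (x + d)) (deriv (jac τ) (x + c)) c :=
    fun x => (hj (x + c)).comp_const_add x c
  have hsub : ∀ x : ℂ, HasDerivAt (fun d => jac τ (x - d)) (-deriv (jac τ) (x - c)) c :=
    fun x => (hj (x - c)).comp_const_sub x c
  have hneg : HasDerivAt (fun d => jac τ (-d)) (-deriv (jac τ) (-c)) c := by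
    simpa using hsub 0
  have l := ((hadd c).mul (hsub c)).const_mul (jac τ a ^ 2)
  have r := ((((hj c).mul hneg).const_mul (cexp c)).const_mul
    (jac τ (a + c) * jac τ (a - c))).add (((hadd a).mul (hsub a)).mul_const (jac τ c ^ 2))
  have hf := funext (jac_three_term hτ a c)
  have l' : HasDerivAt (fun d => jac τ a ^ 2 * (jac τ (c + d) * jac τ (c - d))) _ c := l
  rw [hf] at l'
  have := l'.unique r
  rw [sub_self, jac_zero, ← two_mul, deriv_jac_neg hτ, jac_neg,
    show deriv (jac τ) 0 = -jacQuot τ 0 by rw [jacQuot_zero, neg_neg], Complex.exp_neg] at this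
  rw [logDeriv_apply, logDeriv_apply, logDeriv_apply]
  have h0 := Complex.exp_ne_zero c
  field_simp at this ⊢
  linear_combination this

/-! ### Nonvanishing near the cusp -/

theorem ne_zero_of_norm_le {f : ℤ → ℂ} {S : ℂ} (hS : HasSum f S) (h0 : f 0 = 1)
    (hf : ∀ n, n ≠ 0 → ‖f n‖ ≤ Real.exp (-10) ^ n.natAbs) : S ≠ 0 := by
  set r := Real.exp (-10) with hr
  have hr0 : 0 < r := Real.exp_pos _
  have hr3 : r < 1 / 3 := by
    have h1 : (3 : ℝ) < Real.exp 10 := by linarith [Real.add_one_le_exp (10 : ℝ)]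
    rw [hr, Real.exp_neg, one_div]
    exact inv_strictAnti₀ (by norm_num) h1
  have hg := (hasSum_geometric_of_lt_one hr0.le (by linarith : r < 1))
  have hz : HasSum (fun n : ℤ => r ^ n.natAbs) ((1 - r)⁻¹ + (1 - r)⁻¹ * r) := by
    refine HasSum.of_nat_of_neg_add_one (hg.congr_fun fun n => by simp)
      ((hg.mul_right r).congr_fun fun n => ?_)
    rw [← pow_succ]
    congr 1
  have h1 : HasSum (fun n : ℤ => r ^ n.natAbs - if n = 0 then 1 else 0)
      ((1 - r)⁻¹ + (1 - r)⁻¹ * r - 1) := hz.sub (hasSum_ite_eq 0 1)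
  have h2 : HasSum (fun n : ℤ => f n - if n = 0 then 1 else 0) (S - 1) :=
    hS.sub (hasSum_ite_eq 0 1)
  have h3 : ‖S - 1‖ ≤ (1 - r)⁻¹ + (1 - r)⁻¹ * r - 1 := by
    refine h2.norm_le_of_bounded h1 fun n => ?_
    rcases eq_or_ne n 0 with rfl | hn
    · simp [h0]
    · simpa [hn] using hf n hn
  intro hS0
  rw [hS0, zero_sub, norm_neg, norm_one] at h3
  have h4 : (1 - r)⁻¹ * (1 + r) < 2 := by
    rw [inv_mul_lt_iff₀ (by linarith)]; linarith
  linarith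

theorem norm_exp_mul_le {ℓ : ℂ} (hℓ : ℓ.re ≤ -1) (k n : ℤ) (h : 10 * |n| ≤ k) :
    ‖cexp (k * ℓ)‖ ≤ Real.exp (-10) ^ n.natAbs := by
  rw [norm_exp, ← Real.exp_nat_mul]
  apply Real.exp_le_exp.2
  have h1 : ((k : ℂ) * ℓ).re = k * ℓ.re := by simp
  have h2 : ((n.natAbs : ℕ) : ℝ) = |(n : ℝ)| := by rw [Nat.cast_natAbs, Int.cast_abs]
  have h3 : (10 : ℝ) * |(n : ℝ)| ≤ k := by exact_mod_cast h
  rw [h1, h2]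
  have := abs_nonneg (n : ℝ)
  nlinarith

theorem theta_ne_zero {ℓ : ℂ} (hℓ : ℓ.re ≤ -1) (a b : ℤ) (ha : 0 < a)
    (h : ∀ n : ℤ, n ≠ 0 → 10 * |n| ≤ a * n ^ 2 + b * n) : theta (a * ℓ) (b * ℓ) ≠ 0 := by
  have hre : ((a : ℂ) * ℓ).re < 0 := by
    have : ((a : ℂ) * ℓ).re = a * ℓ.re := by simp
    rw [this]
    have : (0 : ℝ) < a := by exact_mod_cast ha
    nlinarith
  refine ne_zero_of_norm_le (summable_theta hre _).hasSum (by simp) fun n hn => ?_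
  rw [norm_mul, norm_neg_one_zpow, one_mul]
  convert norm_exp_mul_le hℓ (a * n ^ 2 + b * n) n (h n hn) using 3
  push_cast
  ring

theorem abs_le_sq (n : ℤ) : |n| ≤ n ^ 2 := by
  rw [← sq_abs]; nlinarith [abs_nonneg n, Int.one_le_abs (z := n), sq_nonneg (|n| - 1),
    show |n| = 0 ∨ 1 ≤ |n| by have := abs_nonneg n; omega]

theorem jac_ten_ne_zero {ℓ : ℂ} (hℓ : ℓ.re ≤ -1) : jac (25 * ℓ) (10 * ℓ) ≠ 0 := by
  convert theta_ne_zero hℓ 25 (-15) (by norm_num) fun n hn => ?_ using 1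
  · rw [jac]; push_cast; congr 1; ring
  · have := abs_le_sq n
    rcases abs_cases n with ⟨h, _⟩ | ⟨h, _⟩ <;> rw [h] at this ⊢ <;> nlinarith

theorem jac_twenty_ne_zero {ℓ : ℂ} (hℓ : ℓ.re ≤ -1) : jac (25 * ℓ) (20 * ℓ) ≠ 0 := by
  convert theta_ne_zero hℓ 25 (-5) (by norm_num) fun n hn => ?_ using 1
  · rw [jac]; push_cast; congr 1; ring
  · have := abs_le_sq n
    rcases abs_cases n with ⟨h, _⟩ | ⟨h, _⟩ <;> rw [h] at this ⊢ <;> nlinarith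

theorem theta_three_ne_zero {ℓ : ℂ} (hℓ : ℓ.re ≤ -1) :
    theta (3 * (25 * ℓ)) (-(25 * ℓ)) ≠ 0 := by
  convert theta_ne_zero hℓ 75 (-25) (by norm_num) fun n hn => ?_ using 1
  · push_cast; congr 1 <;> ring
  · have := abs_le_sq n
    rcases abs_cases n with ⟨h, _⟩ | ⟨h, _⟩ <;> rw [h] at this ⊢ <;> nlinarith

theorem re_mul_lt_zero {ℓ : ℂ} (hℓ : ℓ.re < 0) : (25 * ℓ).re < 0 := by
  simp; linarith

theorem hasSum_jacQuot_zero {τ : ℂ} (hτ : τ.re < 0) :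
    HasSum (fun n : ℤ => (-1 : ℂ) ^ n * ((n + 1) * cexp (n * (n + 1) * τ))) (jacQuot τ 0) := by
  have h : HasSum _ (deriv (theta τ) (0 - τ)) := hasSum_deriv_theta hτ (0 - τ)
  have h1 : deriv (jac τ) 0 = deriv (theta τ) (0 - τ) := by
    have : jac τ = fun u => theta τ (u - τ) := rfl
    rw [this, deriv_comp_sub_const]
  rw [jacQuot_zero, h1]
  rw [← (Equiv.addRight (1 : ℤ)).hasSum_iff] at h
  refine h.neg.congr_fun fun n => ?_
  simp only [Function.comp, Equiv.coe_addRight, Int.cast_add, Int.cast_one]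
  rw [zpow_add₀ (by norm_num), zpow_one, mul_neg_one, neg_mul, neg_neg]
  congr 3
  ring

theorem jacQuot_zero_ne_zero {ℓ : ℂ} (hℓ : ℓ.re ≤ -1) : jacQuot (25 * ℓ) 0 ≠ 0 := by
  refine ne_zero_of_norm_le (hasSum_jacQuot_zero (re_mul_lt_zero (by linarith))) (by simp)
    fun n hn => ?_
  rw [norm_mul, norm_neg_one_zpow, one_mul, norm_mul]
  rcases eq_or_ne n (-1) with rfl | hn1
  · simp; positivity
  have h1 : |n| ≤ n * (n + 1) := by
    rcases abs_cases n with ⟨h, h'⟩ | ⟨h, h'⟩ <;> rw [h]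
    · nlinarith
    · have : n ≤ -2 := by omega
      nlinarith
  have h2 : ‖(n : ℂ) + 1‖ ≤ Real.exp n.natAbs := by
    refine le_trans (norm_add_le _ _) ?_
    rw [norm_one, norm_intCast, Nat.cast_natAbs, Int.cast_abs]
    exact Real.add_one_le_exp _
  have h3 : ‖cexp (n * (n + 1) * (25 * ℓ))‖ ≤ Real.exp (-(11 * n.natAbs)) := by
    rw [norm_exp]
    apply Real.exp_le_exp.2
    have e1 : ((n : ℂ) * (n + 1) * (25 * ℓ)) = ((n * (n + 1) * 25 : ℤ) : ℂ) * ℓ := by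
      push_cast; ring
    have e2 : (((n * (n + 1) * 25 : ℤ) : ℂ) * ℓ).re = (n * (n + 1) * 25 : ℤ) * ℓ.re := by
      rw [← ofReal_intCast, re_ofReal_mul]
    rw [e1, e2, Nat.cast_natAbs]
    have h4 : (|n| : ℤ) ≤ ((n * (n + 1) : ℤ) : ℝ) := by exact_mod_cast h1
    have h5 : (0 : ℝ) ≤ (|n| : ℤ) := by exact_mod_cast abs_nonneg n
    rw [Int.cast_mul (n * (n + 1))]
    push_cast at *
    nlinarith
  calc ‖(n : ℂ) + 1‖ * ‖cexp (n * (n + 1) * (25 * ℓ))‖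
      ≤ Real.exp n.natAbs * Real.exp (-(11 * n.natAbs)) := by gcongr
    _ = Real.exp (-10) ^ n.natAbs := by
      rw [← Real.exp_add, ← Real.exp_nat_mul]; congr 1; ring

/-! ### Splitting series by residues modulo five -/

theorem tsum_eq_sum_residues {f : ℤ → ℂ} (hf : Summable f) (c : ℤ) :
    ∑' n, f n = ∑' m, f (5 * m + c) + ∑' m, f (5 * m + (c + 1)) + ∑' m, f (5 * m + (c + 2)) +
      ∑' m, f (5 * m + (c + 3)) + ∑' m, f (5 * m + (c + 4)) := by
  rw [← (Equiv.addRight c).tsum_eq, ← (Int.divModEquiv 5).symm.tsum_eq,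
    ← (Equiv.prodComm (Fin 5) ℤ).tsum_eq]
  have hs : Summable fun p : Fin 5 × ℤ => f (Equiv.addRight c ((Int.divModEquiv 5).symm
      (Equiv.prodComm (Fin 5) ℤ p))) := by
    exact ((Equiv.prodComm (Fin 5) ℤ).trans
      ((Int.divModEquiv 5).symm.trans (Equiv.addRight c))).summable_iff.2 hf
  rw [hs.tsum_prod, tsum_fintype, Fin.sum_univ_five]
  congr 1
  · congr 1
    · congr 1
      · congr 1
        all_goals
          refine tsum_congr fun m => ?_
          simp [Int.divModEquiv]
          congr 1
          ring
      all_goals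
        refine tsum_congr fun m => ?_
        simp [Int.divModEquiv]
        congr 1
        ring
    all_goals
      refine tsum_congr fun m => ?_
      simp [Int.divModEquiv]
      congr 1
      ring
  all_goals
    refine tsum_congr fun m => ?_
    simp [Int.divModEquiv]
    congr 1
    ring

/-! ### The series attached to ranks modulo five and its dissection -/

/-- The bilateral series `∑ (-1)^n q^(n(3n+1)/2 + bn) / (1 - q^(5n))` with the (singular) term
`n = 0` omitted, where `q = exp (2ℓ)`. -/
noncomputable def rankTerm (ℓ : ℂ) (b n : ℤ) : ℂ :=
  (-1) ^ n * cexp ((3 * n ^ 2 + n + 2 * b * n) * ℓ) / (1 - cexp (10 * n * ℓ))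

theorem summable_rankTerm {ℓ : ℂ} (hℓ : ℓ.re < 0) (b : ℤ) : Summable (rankTerm ℓ b) := by
  have h5 : (5 * ℓ).re < 0 := by simp; linarith
  have h3 : (3 * ℓ).re < 0 := by simp; linarith
  refine Summable.of_norm_bounded_eventually
    ((summable_theta h3 ((1 + 2 * b) * ℓ)).norm.mul_left 2) ?_
  filter_upwards [eventually_half_le_norm h5 0] with n hn
  have h := hn 0 (by simp)
  have e1 : (0 : ℂ) + 2 * n * (5 * ℓ) = 10 * n * ℓ := by ring
  have e2 : 3 * ℓ * n ^ 2 + (1 + 2 * b) * ℓ * n = (3 * (n : ℂ) ^ 2 + n + 2 * b * n) * ℓ := by ring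
  rw [e1] at h
  rw [rankTerm, norm_div, e2, div_le_iff₀ (by linarith)]
  nlinarith [norm_nonneg ((-1 : ℂ) ^ n * cexp ((3 * n ^ 2 + n + 2 * b * n) * ℓ))]

/-- The sum of `rankTerm`. -/
noncomputable def rankLam (ℓ : ℂ) (b : ℤ) : ℂ := ∑' n, rankTerm ℓ b n

theorem tsum_rankTerm_residue (ℓ : ℂ) (b r : ℤ) :
    ∑' m, rankTerm ℓ b (5 * m + r) = (-1) ^ r * cexp ((3 * r ^ 2 + r + 2 * b * r) * ℓ) *
      lam (25 * ℓ) (10 * r * ℓ) ((30 * r + 10 * b - 70) * ℓ) := by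
  rw [lam, ← tsum_mul_left]
  refine tsum_congr fun m => ?_
  have e1 : ((-1 : ℂ)) ^ (5 * m + r) = (-1) ^ r * (-1) ^ m := by
    rw [zpow_add₀ (by norm_num), zpow_mul, mul_comm]
    norm_num
  have e2 : (3 * ((5 * m + r : ℤ) : ℂ) ^ 2 + (5 * m + r : ℤ) + 2 * b * (5 * m + r : ℤ)) * ℓ =
      (3 * r ^ 2 + r + 2 * b * r) * ℓ +
        (m * ((30 * r + 10 * b - 70) * ℓ) + 3 * m * (m + 1) * (25 * ℓ)) := by
    push_cast; ring
  have e3 : 10 * ((5 * m + r : ℤ) : ℂ) * ℓ = 10 * r * ℓ + 2 * m * (25 * ℓ) := by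
    push_cast; ring
  rw [rankTerm, e1, e2, e3, Complex.exp_add]
  ring

theorem tsum_theta_residue (a b : ℂ) (r : ℤ) :
    ∑' m : ℤ, (-1 : ℂ) ^ (5 * m + r) * cexp (a * (5 * m + r : ℤ) ^ 2 + b * (5 * m + r : ℤ)) =
      (-1) ^ r * cexp (a * r ^ 2 + b * r) * theta (25 * a) (5 * b + 10 * a * r) := by
  rw [theta, ← tsum_mul_left]
  refine tsum_congr fun m => ?_
  have e1 : ((-1 : ℂ)) ^ (5 * m + r) = (-1) ^ r * (-1) ^ m := by
    rw [zpow_add₀ (by norm_num), zpow_mul, mul_comm]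
    norm_num
  have e2 : a * ((5 * m + r : ℤ) : ℂ) ^ 2 + b * (5 * m + r : ℤ) =
      (a * r ^ 2 + b * r) + (25 * a * m ^ 2 + (5 * b + 10 * a * r) * m) := by
    push_cast; ring
  rw [e1, e2, Complex.exp_add]
  ring

theorem exp_mul_eq_pow {ℓ q : ℂ} (hq : q = cexp (2 * ℓ)) {z : ℂ} (n : ℕ) (h : z = 2 * n * ℓ) :
    cexp z = q ^ n := by
  rw [hq, ← Complex.exp_nat_mul, h]
  congr 1
  ring

theorem jac_forty (ℓ : ℂ) : jac (25 * ℓ) (40 * ℓ) = jac (25 * ℓ) (10 * ℓ) := by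
  rw [← jac_two_mul_sub]; congr 1; ring

theorem jac_thirty (ℓ : ℂ) : jac (25 * ℓ) (30 * ℓ) = jac (25 * ℓ) (20 * ℓ) := by
  rw [← jac_two_mul_sub]; congr 1; ring

theorem jac_sixty (ℓ : ℂ) :
    jac (25 * ℓ) (60 * ℓ) = -cexp (-(10 * ℓ)) * jac (25 * ℓ) (10 * ℓ) := by
  rw [← jac_add_two_mul]; congr 1; ring

theorem lamCoeff_ten {ℓ : ℂ} (hℓ : ℓ.re ≤ -1) : lamCoeff (25 * ℓ) (10 * ℓ) =
    cexp (2 * ℓ) ^ 5 * (jac (25 * ℓ) (20 * ℓ) / jac (25 * ℓ) (10 * ℓ)) := by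
  rw [lamCoeff_eq (re_mul_lt_zero (by linarith)) (theta_three_ne_zero hℓ)
    (jacQuot_zero_ne_zero hℓ) (jac_ten_ne_zero hℓ), exp_mul_eq_pow rfl 5 (by push_cast; ring),
    show 2 * (10 * ℓ) = 20 * ℓ by ring, mul_div_assoc]

theorem lamCoeff_twenty {ℓ : ℂ} (hℓ : ℓ.re ≤ -1) : lamCoeff (25 * ℓ) (20 * ℓ) =
    cexp (2 * ℓ) ^ 10 / (jac (25 * ℓ) (20 * ℓ) / jac (25 * ℓ) (10 * ℓ)) := by
  rw [lamCoeff_eq (re_mul_lt_zero (by linarith)) (theta_three_ne_zero hℓ)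
    (jacQuot_zero_ne_zero hℓ) (jac_twenty_ne_zero hℓ), exp_mul_eq_pow rfl 10 (by push_cast; ring),
    show 2 * (20 * ℓ) = 40 * ℓ by ring, jac_forty]
  have := jac_ten_ne_zero hℓ
  have := jac_twenty_ne_zero hℓ
  field_simp

/-- The five-dissection of Euler's function. -/
theorem theta_dissection {ℓ q A : ℂ} (hℓ : ℓ.re ≤ -1) (hq : q = cexp (2 * ℓ))
    (hA : A = jac (25 * ℓ) (20 * ℓ) / jac (25 * ℓ) (10 * ℓ)) :
    theta (3 * ℓ) ℓ = theta (3 * (25 * ℓ)) (-(25 * ℓ)) * (A - q - q ^ 2 / A) := by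
  have h3 : (3 * ℓ).re < 0 := by simp; linarith
  have hq0 : q ≠ 0 := hq ▸ Complex.exp_ne_zero _
  have hA0 : A ≠ 0 := hA ▸ div_ne_zero (jac_twenty_ne_zero hℓ) (jac_ten_ne_zero hℓ)
  have hθ := theta_three_ne_zero hℓ
  have h1 := lamCoeff_ten hℓ
  have h2 := lamCoeff_twenty hℓ
  rw [← hA, ← hq] at h1 h2
  rw [lamCoeff, exp_mul_eq_pow hq 10 (by push_cast; ring),
    exp_mul_eq_pow hq 5 (by push_cast; ring)] at h1
  rw [lamCoeff, exp_mul_eq_pow hq 20 (by push_cast; ring),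
    exp_mul_eq_pow hq 10 (by push_cast; ring)] at h2
  have h := tsum_eq_sum_residues (summable_theta h3 ℓ) (-3)
  simp only [tsum_theta_residue] at h
  rw [← theta] at h
  have k1 : (-1 : ℂ) ^ (-3 : ℤ) = -1 := by norm_num
  have k2 : (-1 : ℂ) ^ (-3 + 1 : ℤ) = 1 := by norm_num
  have k3 : (-1 : ℂ) ^ (-3 + 2 : ℤ) = -1 := by norm_num
  have k4 : (-1 : ℂ) ^ (-3 + 3 : ℤ) = 1 := by norm_num
  have k5 : (-1 : ℂ) ^ (-3 + 4 : ℤ) = -1 := by norm_num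
  rw [k1, k2, k3, k4, k5, exp_mul_eq_pow hq 12 (by push_cast; ring),
    exp_mul_eq_pow hq 5 (by push_cast; ring), exp_mul_eq_pow hq 1 (by push_cast; ring),
    exp_mul_eq_pow hq 0 (by push_cast; ring), exp_mul_eq_pow hq 2 (by push_cast; ring),
    show 5 * ℓ + 10 * (3 * ℓ) * ((-3 : ℤ) : ℂ) = -3 * (20 * ℓ) - 25 * ℓ by push_cast; ring,
    show 5 * ℓ + 10 * (3 * ℓ) * ((-3 + 1 : ℤ) : ℂ) = -3 * (10 * ℓ) - 25 * ℓ by push_cast; ring,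
    show 5 * ℓ + 10 * (3 * ℓ) * ((-3 + 2 : ℤ) : ℂ) = -(25 * ℓ) by push_cast; ring,
    show 5 * ℓ + 10 * (3 * ℓ) * ((-3 + 3 : ℤ) : ℂ) = 3 * (10 * ℓ) - 25 * ℓ by push_cast; ring,
    show 5 * ℓ + 10 * (3 * ℓ) * ((-3 + 4 : ℤ) : ℂ) = 3 * (20 * ℓ) - 25 * ℓ by push_cast; ring,
    show 25 * (3 * ℓ) = 3 * (25 * ℓ) by ring] at h
  rw [h]
  generalize theta (3 * (25 * ℓ)) (-(25 * ℓ)) = θ at *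
  generalize theta (3 * (25 * ℓ)) (-3 * (20 * ℓ) - 25 * ℓ) = θa at *
  generalize theta (3 * (25 * ℓ)) (-3 * (10 * ℓ) - 25 * ℓ) = θb at *
  generalize theta (3 * (25 * ℓ)) (3 * (10 * ℓ) - 25 * ℓ) = θc at *
  generalize theta (3 * (25 * ℓ)) (3 * (20 * ℓ) - 25 * ℓ) = θd at *
  rw [div_eq_iff hθ] at h1 h2
  have h1' : q ^ 5 * θb + θc = A * θ := by
    apply mul_left_cancel₀ (pow_ne_zero 5 hq0); linear_combination h1
  have h2' : q ^ 10 * θa + θd = θ / A := by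
    apply mul_left_cancel₀ (pow_ne_zero 10 hq0); linear_combination h2
  linear_combination h1' - q ^ 2 * h2'

theorem logDeriv_relations {ℓ q : ℂ} (hℓ : ℓ.re ≤ -1) (hq : q = cexp (2 * ℓ)) :
    jacQuot (25 * ℓ) 0 * jac (25 * ℓ) (20 * ℓ) ^ 2 / jac (25 * ℓ) (10 * ℓ) ^ 3 =
      1 - 3 * logDeriv (jac (25 * ℓ)) (10 * ℓ) - logDeriv (jac (25 * ℓ)) (20 * ℓ) ∧
    q ^ 5 * jacQuot (25 * ℓ) 0 * jac (25 * ℓ) (10 * ℓ) ^ 2 / jac (25 * ℓ) (20 * ℓ) ^ 3 =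
      3 * logDeriv (jac (25 * ℓ)) (20 * ℓ) - logDeriv (jac (25 * ℓ)) (10 * ℓ) := by
  have hτ : (25 * ℓ).re < 0 := re_mul_lt_zero (by linarith)
  have h10 := jac_ten_ne_zero hℓ
  have h20 := jac_twenty_ne_zero hℓ
  have hq0 : q ≠ 0 := hq ▸ Complex.exp_ne_zero _
  have e60 : cexp (-(10 * ℓ)) = (q ^ 5)⁻¹ := by
    rw [Complex.exp_neg, exp_mul_eq_pow hq 5 (by push_cast; ring)]
  have h60 : jac (25 * ℓ) (60 * ℓ) = -(q ^ 5)⁻¹ * jac (25 * ℓ) (10 * ℓ) := by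
    rw [jac_sixty, e60]
  have l30 : logDeriv (jac (25 * ℓ)) (30 * ℓ) = -logDeriv (jac (25 * ℓ)) (20 * ℓ) := by
    rw [← logDeriv_jac_two_mul_sub]; congr 1; ring
  have l60 : logDeriv (jac (25 * ℓ)) (60 * ℓ) = logDeriv (jac (25 * ℓ)) (10 * ℓ) - 1 := by
    rw [← logDeriv_jac_add hτ h10]; congr 1; ring
  have h1 := jac_logDeriv (a := 20 * ℓ) hτ h10
    (by rw [show 20 * ℓ + 10 * ℓ = 30 * ℓ by ring, jac_thirty]; exact h20)
    (by rw [show 20 * ℓ - 10 * ℓ = 10 * ℓ by ring]; exact h10)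
  have h2 := jac_logDeriv (a := 40 * ℓ) hτ h20
    (by rw [show 40 * ℓ + 20 * ℓ = 60 * ℓ by ring, h60]
        exact mul_ne_zero (neg_ne_zero.2 (inv_ne_zero (pow_ne_zero 5 hq0))) h10)
    (by rw [show 40 * ℓ - 20 * ℓ = 20 * ℓ by ring]; exact h20)
  rw [show 20 * ℓ + 10 * ℓ = 30 * ℓ by ring, show 20 * ℓ - 10 * ℓ = 10 * ℓ by ring,
    show 2 * (10 * ℓ) = 20 * ℓ by ring, jac_thirty, l30] at h1
  rw [show 40 * ℓ + 20 * ℓ = 60 * ℓ by ring, show 40 * ℓ - 20 * ℓ = 20 * ℓ by ring,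
    show 2 * (20 * ℓ) = 40 * ℓ by ring, jac_forty, h60, l60] at h2
  generalize jac (25 * ℓ) (10 * ℓ) = a at *
  generalize jac (25 * ℓ) (20 * ℓ) = b at *
  constructor
  · rw [div_eq_iff (pow_ne_zero 3 h10)]
    apply mul_left_cancel₀ h20
    linear_combination h1
  · rw [div_eq_iff (pow_ne_zero 3 h20)]
    generalize logDeriv (jac (25 * ℓ)) (10 * ℓ) = r at *
    generalize logDeriv (jac (25 * ℓ)) (20 * ℓ) = s at *
    field_simp at h2
    linear_combination h2

theorem rankLam_one_dissection {ℓ q A θ ϖ T : ℂ} (hℓ : ℓ.re ≤ -1) (hq : q = cexp (2 * ℓ))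
    (hA : A = jac (25 * ℓ) (20 * ℓ) / jac (25 * ℓ) (10 * ℓ))
    (hθ : θ = theta (3 * (25 * ℓ)) (-(25 * ℓ)))
    (hϖ : ϖ = jacQuot (25 * ℓ) 0 / jac (25 * ℓ) (20 * ℓ))
    (hT : T = lam (25 * ℓ) (20 * ℓ) 0) :
    rankLam ℓ 1 + 1 / 5 = theta (3 * ℓ) ℓ * (ϖ * A ^ 2 / (5 * θ) + q * (ϖ * A / (5 * θ)) +
      q ^ 2 * (2 * ϖ / (5 * θ)) + q ^ 3 * (-2 * ϖ / (5 * A * θ) - q ^ 5 * T / θ)) := by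
  have hτ : (25 * ℓ).re < 0 := re_mul_lt_zero (by linarith)
  have h10 := jac_ten_ne_zero hℓ
  have h20 := jac_twenty_ne_zero hℓ
  have h0 := theta_three_ne_zero hℓ
  have hκ := jacQuot_zero_ne_zero hℓ
  have hq0 : q ≠ 0 := hq ▸ Complex.exp_ne_zero _
  have hA0 : A ≠ 0 := hA ▸ div_ne_zero h20 h10
  have hX := logDeriv_relations hℓ hq
  have h := tsum_eq_sum_residues (summable_rankTerm (by linarith : ℓ.re < 0) 1) 0
  simp only [tsum_rankTerm_residue] at h
  have i0 := lam_identity_pole hτ h0 hκ h20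
    (by rw [show 2 * (20 * ℓ) = 40 * ℓ by ring, jac_forty]; exact h10)
  have i1 := lam_identity (u := 20 * ℓ) (s := 10 * ℓ) hτ h0 h20
    (by rw [show 20 * ℓ + 10 * ℓ = 30 * ℓ by ring, jac_thirty]; exact h20)
    (by rw [show 20 * ℓ - 10 * ℓ = 10 * ℓ by ring]; exact h10)
  have l40 : logDeriv (jac (25 * ℓ)) (40 * ℓ) = -logDeriv (jac (25 * ℓ)) (10 * ℓ) := by
    rw [← logDeriv_jac_two_mul_sub]; congr 1; ring
  rw [lamCoeff_twenty hℓ, ← hA, ← hq, exp_mul_eq_pow hq 30 (by push_cast; ring),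
    show 2 * (20 * ℓ) = 40 * ℓ by ring, l40, ← hT] at i0
  rw [lamCoeff_ten hℓ, ← hA, ← hq, exp_mul_eq_pow hq 15 (by push_cast; ring),
    show 20 * ℓ + 10 * ℓ = 30 * ℓ by ring, show 20 * ℓ - 10 * ℓ = 10 * ℓ by ring,
    show 2 * (10 * ℓ) = 20 * ℓ by ring, jac_thirty, ← hT] at i1
  have k1 : (-1 : ℂ) ^ (0 + 1 : ℤ) = -1 := by norm_num
  have k2 : (-1 : ℂ) ^ (0 + 2 : ℤ) = 1 := by norm_num
  have k3 : (-1 : ℂ) ^ (0 + 3 : ℤ) = -1 := by norm_num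
  have k4 : (-1 : ℂ) ^ (0 + 4 : ℤ) = 1 := by norm_num
  rw [zpow_zero, k1, k2, k3, k4, exp_mul_eq_pow hq 0 (by push_cast; ring),
    exp_mul_eq_pow hq 3 (by push_cast; ring), exp_mul_eq_pow hq 9 (by push_cast; ring),
    exp_mul_eq_pow hq 18 (by push_cast; ring), exp_mul_eq_pow hq 30 (by push_cast; ring),
    show 10 * ((0 : ℤ) : ℂ) * ℓ = 0 by push_cast; ring,
    show 10 * ((0 + 1 : ℤ) : ℂ) * ℓ = 10 * ℓ by push_cast; ring,
    show 10 * ((0 + 2 : ℤ) : ℂ) * ℓ = 20 * ℓ by push_cast; ring,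
    show 10 * ((0 + 3 : ℤ) : ℂ) * ℓ = 30 * ℓ by push_cast; ring,
    show 10 * ((0 + 4 : ℤ) : ℂ) * ℓ = 40 * ℓ by push_cast; ring,
    show (30 * ((0 : ℤ) : ℂ) + 10 * (1 : ℤ) - 70) * ℓ = -3 * (20 * ℓ) by push_cast; ring,
    show (30 * ((0 + 1 : ℤ) : ℂ) + 10 * (1 : ℤ) - 70) * ℓ = -3 * (10 * ℓ) by push_cast; ring,
    show (30 * ((0 + 2 : ℤ) : ℂ) + 10 * (1 : ℤ) - 70) * ℓ = 0 by push_cast; ring,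
    show (30 * ((0 + 3 : ℤ) : ℂ) + 10 * (1 : ℤ) - 70) * ℓ = 3 * (10 * ℓ) by push_cast; ring,
    show (30 * ((0 + 4 : ℤ) : ℂ) + 10 * (1 : ℤ) - 70) * ℓ = 3 * (20 * ℓ) by push_cast; ring,
    ← hT] at h
  rw [rankLam, h, theta_dissection hℓ hq hA, ← hθ]
  rw [← hθ] at h0
  generalize jac (25 * ℓ) (10 * ℓ) = a at *
  generalize jac (25 * ℓ) (20 * ℓ) = b at *
  have hP : jacQuot (25 * ℓ) 0 = ϖ * b := by rw [hϖ]; field_simp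
  have hb : b = A * a := by rw [hA]; field_simp
  obtain ⟨hX, hY⟩ := hX
  rw [hP, hb] at hX hY i1
  have hX' : ϖ * A ^ 3 = 1 - 3 * logDeriv (jac (25 * ℓ)) (10 * ℓ) -
      logDeriv (jac (25 * ℓ)) (20 * ℓ) := by
    rw [← hX]; field_simp
  have hY' : q ^ 5 * ϖ / A ^ 2 = 3 * logDeriv (jac (25 * ℓ)) (20 * ℓ) -
      logDeriv (jac (25 * ℓ)) (10 * ℓ) := by
    rw [← hY]; field_simp
  have i1' : lam (25 * ℓ) (10 * ℓ) (-3 * (10 * ℓ)) +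
      q ^ 15 * lam (25 * ℓ) (30 * ℓ) (3 * (10 * ℓ)) - q ^ 5 * A * T = ϖ := by
    rw [i1]; field_simp
  have e : θ * (A - q - q ^ 2 / A) * (ϖ * A ^ 2 / (5 * θ) + q * (ϖ * A / (5 * θ)) +
      q ^ 2 * (2 * ϖ / (5 * θ)) + q ^ 3 * (-2 * ϖ / (5 * A * θ) - q ^ 5 * T / θ)) =
      (ϖ * A ^ 3 + 2 * (q ^ 5 * ϖ / A ^ 2)) / 5 - q ^ 3 * ϖ
        - q ^ 8 * T * (A - q - q ^ 2 / A) := by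
    field_simp
    ring
  rw [e, hX', hY']
  linear_combination i0 - q ^ 3 * i1'

theorem rankLam_neg_five_dissection {ℓ q A θ ϖ T : ℂ} (hℓ : ℓ.re ≤ -1) (hq : q = cexp (2 * ℓ))
    (hA : A = jac (25 * ℓ) (20 * ℓ) / jac (25 * ℓ) (10 * ℓ))
    (hθ : θ = theta (3 * (25 * ℓ)) (-(25 * ℓ)))
    (hϖ : ϖ = jacQuot (25 * ℓ) 0 / jac (25 * ℓ) (10 * ℓ))
    (hT : T = lam (25 * ℓ) (40 * ℓ) 0) :
    rankLam ℓ (-5) + 7 / 5 = theta (3 * ℓ) ℓ * ((2 * ϖ * A / (5 * θ) - q ^ 5 * T / θ) +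
      q * (2 * ϖ / (5 * θ)) + q ^ 2 * (-ϖ / (5 * A * θ)) + q ^ 3 * (ϖ / (5 * A ^ 2 * θ))) := by
  have hτ : (25 * ℓ).re < 0 := re_mul_lt_zero (by linarith)
  have h10 := jac_ten_ne_zero hℓ
  have h20 := jac_twenty_ne_zero hℓ
  have h0 := theta_three_ne_zero hℓ
  have hκ := jacQuot_zero_ne_zero hℓ
  have hq0 : q ≠ 0 := hq ▸ Complex.exp_ne_zero _
  have hA0 : A ≠ 0 := hA ▸ div_ne_zero h20 h10
  have hX := logDeriv_relations hℓ hq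
  have e60 : cexp (-(10 * ℓ)) = (q ^ 5)⁻¹ := by
    rw [Complex.exp_neg, exp_mul_eq_pow hq 5 (by push_cast; ring)]
  have h60 : jac (25 * ℓ) (60 * ℓ) = -(q ^ 5)⁻¹ * jac (25 * ℓ) (10 * ℓ) := by
    rw [jac_sixty, e60]
  have h := tsum_eq_sum_residues (summable_rankTerm (by linarith : ℓ.re < 0) (-5)) 2
  simp only [tsum_rankTerm_residue] at h
  have i0 := lam_identity (u := 40 * ℓ) (s := 20 * ℓ) hτ h0 (by rw [jac_forty]; exact h10)
    (by rw [show 40 * ℓ + 20 * ℓ = 60 * ℓ by ring, h60]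
        exact mul_ne_zero (neg_ne_zero.2 (inv_ne_zero (pow_ne_zero 5 hq0))) h10)
    (by rw [show 40 * ℓ - 20 * ℓ = 20 * ℓ by ring]; exact h20)
  have i1 := lam_identity_pole' hτ h0 hκ h10
    (by rw [show 2 * (10 * ℓ) = 20 * ℓ by ring]; exact h20)
  rw [lamCoeff_twenty hℓ, ← hA, ← hq, exp_mul_eq_pow hq 30 (by push_cast; ring),
    show 40 * ℓ + 20 * ℓ = 60 * ℓ by ring, show 40 * ℓ - 20 * ℓ = 20 * ℓ by ring,
    show 2 * (20 * ℓ) = 40 * ℓ by ring, jac_forty, h60, ← hT] at i0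
  rw [lamCoeff_ten hℓ, ← hA, ← hq, exp_mul_eq_pow hq 15 (by push_cast; ring),
    show 2 * (25 * ℓ) - 2 * (10 * ℓ) = 30 * ℓ by ring,
    show 2 * (25 * ℓ) - 10 * ℓ = 40 * ℓ by ring, show 2 * (25 * ℓ) = 50 * ℓ by ring,
    show 2 * (10 * ℓ) = 20 * ℓ by ring, ← hT] at i1
  have k0 : (-1 : ℂ) ^ (2 : ℤ) = 1 := by norm_num
  have k1 : (-1 : ℂ) ^ (2 + 1 : ℤ) = -1 := by norm_num
  have k2 : (-1 : ℂ) ^ (2 + 2 : ℤ) = 1 := by norm_num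
  have k3 : (-1 : ℂ) ^ (2 + 3 : ℤ) = -1 := by norm_num
  have k4 : (-1 : ℂ) ^ (2 + 4 : ℤ) = 1 := by norm_num
  have e3 : cexp ((3 * ((2 : ℤ) : ℂ) ^ 2 + (2 : ℤ) + 2 * (-5 : ℤ) * (2 : ℤ)) * ℓ) =
      (q ^ 3)⁻¹ := by
    rw [← exp_mul_eq_pow (z := 6 * ℓ) hq 3 (by push_cast; ring), ← Complex.exp_neg]
    congr 1
    push_cast; ring
  rw [k0, k1, k2, k3, k4, e3, exp_mul_eq_pow hq 0 (by push_cast; ring),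
    exp_mul_eq_pow hq 6 (by push_cast; ring), exp_mul_eq_pow hq 15 (by push_cast; ring),
    exp_mul_eq_pow hq 27 (by push_cast; ring),
    show 10 * ((2 : ℤ) : ℂ) * ℓ = 20 * ℓ by push_cast; ring,
    show 10 * ((2 + 1 : ℤ) : ℂ) * ℓ = 30 * ℓ by push_cast; ring,
    show 10 * ((2 + 2 : ℤ) : ℂ) * ℓ = 40 * ℓ by push_cast; ring,
    show 10 * ((2 + 3 : ℤ) : ℂ) * ℓ = 50 * ℓ by push_cast; ring,
    show 10 * ((2 + 4 : ℤ) : ℂ) * ℓ = 60 * ℓ by push_cast; ring,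
    show (30 * ((2 : ℤ) : ℂ) + 10 * (-5 : ℤ) - 70) * ℓ = -3 * (20 * ℓ) by push_cast; ring,
    show (30 * ((2 + 1 : ℤ) : ℂ) + 10 * (-5 : ℤ) - 70) * ℓ = -3 * (10 * ℓ) by push_cast; ring,
    show (30 * ((2 + 2 : ℤ) : ℂ) + 10 * (-5 : ℤ) - 70) * ℓ = 0 by push_cast; ring,
    show (30 * ((2 + 3 : ℤ) : ℂ) + 10 * (-5 : ℤ) - 70) * ℓ = 3 * (10 * ℓ) by push_cast; ring,
    show (30 * ((2 + 4 : ℤ) : ℂ) + 10 * (-5 : ℤ) - 70) * ℓ = 3 * (20 * ℓ) by push_cast; ring,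
    ← hT] at h
  rw [rankLam, h, theta_dissection hℓ hq hA, ← hθ]
  rw [← hθ] at h0
  generalize jac (25 * ℓ) (10 * ℓ) = a at *
  generalize jac (25 * ℓ) (20 * ℓ) = b at *
  have hP : jacQuot (25 * ℓ) 0 = ϖ * a := by rw [hϖ]; field_simp
  have hb : b = A * a := by rw [hA]; field_simp
  obtain ⟨hX, hY⟩ := hX
  rw [hP, hb] at hX hY i0
  have hX' : ϖ * A ^ 2 = 1 - 3 * logDeriv (jac (25 * ℓ)) (10 * ℓ) -
      logDeriv (jac (25 * ℓ)) (20 * ℓ) := by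
    rw [← hX]; field_simp
  have hY' : q ^ 5 * ϖ / A ^ 3 = 3 * logDeriv (jac (25 * ℓ)) (20 * ℓ) -
      logDeriv (jac (25 * ℓ)) (10 * ℓ) := by
    rw [← hY]; field_simp
  have i0' : (q ^ 3)⁻¹ * lam (25 * ℓ) (20 * ℓ) (-3 * (20 * ℓ)) +
      q ^ 27 * lam (25 * ℓ) (60 * ℓ) (3 * (20 * ℓ)) = q ^ 7 / A * T - q ^ 2 * ϖ := by
    have hpow : q ^ 27 = (q ^ 3)⁻¹ * q ^ 30 := by field_simp
    have hpow' : q ^ 7 = (q ^ 3)⁻¹ * q ^ 10 := by field_simp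
    have hr : (q ^ 3)⁻¹ * (ϖ * a * (A * a) *
        a / (a *
          (-(q ^ 5)⁻¹ * a) * (A * a))) =
        - (q ^ 2 * ϖ) := by
      field_simp
    rw [← i0] at hr
    rw [hpow, hpow']
    linear_combination hr
  have e : θ * (A - q - q ^ 2 / A) * ((2 * ϖ * A / (5 * θ) - q ^ 5 * T / θ) +
      q * (2 * ϖ / (5 * θ)) + q ^ 2 * (-ϖ / (5 * A * θ)) + q ^ 3 * (ϖ / (5 * A ^ 2 * θ))) =
      (2 * (ϖ * A ^ 2) - q ^ 5 * ϖ / A ^ 3) / 5 - q ^ 2 * ϖ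
        - q ^ 5 * T * (A - q - q ^ 2 / A) := by
    field_simp
    ring
  rw [e, hX', hY']
  linear_combination i0' - i1

theorem rankLam_four_sub (ℓ : ℂ) (b : ℤ) : rankLam ℓ (4 - b) = -rankLam ℓ b := by
  rw [rankLam, rankLam, ← (Equiv.neg ℤ).tsum_eq (rankTerm ℓ b), ← tsum_neg]
  refine tsum_congr fun n => ?_
  have e1 : (-1 : ℂ) ^ (-n) = (-1) ^ n := by
    rw [zpow_neg, ← inv_zpow]; norm_num
  have e2 : (3 * ((n : ℤ) : ℂ) ^ 2 + n + 2 * (4 - b : ℤ) * n) * ℓ =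
      (3 * ((-n : ℤ) : ℂ) ^ 2 + (-n : ℤ) + 2 * b * (-n : ℤ)) * ℓ + 10 * n * ℓ := by
    push_cast; ring
  have e3 : 10 * ((-n : ℤ) : ℂ) * ℓ = -(10 * n * ℓ) := by push_cast; ring
  rw [Equiv.neg_apply, rankTerm, rankTerm, e1, e2, e3, Complex.exp_neg, Complex.exp_add]
  have hE := Complex.exp_ne_zero (10 * n * ℓ)
  generalize cexp (10 * n * ℓ) = E at *
  rcases eq_or_ne E 1 with rfl | h1
  · simp
  · have h2 : 1 - E ≠ 0 := sub_ne_zero.2 h1.symm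
    have h3 : 1 - E⁻¹ = -(1 - E) / E := by field_simp; ring
    rw [h3]
    field_simp

theorem rankLam_two (ℓ : ℂ) : rankLam ℓ 2 = 0 := by
  have h := rankLam_four_sub ℓ 2
  norm_num at h
  linear_combination h / 2

theorem theta_neg_nine (ℓ : ℂ) : theta (3 * ℓ) (-(9 * ℓ)) = 0 := by
  have h := theta_shift (3 * ℓ) (-(9 * ℓ)) 3
  rw [show 3 * ℓ * ((3 : ℤ) : ℂ) ^ 2 + -(9 * ℓ) * ((3 : ℤ) : ℂ) = 0 by push_cast; ring,
    show -(9 * ℓ) + 2 * (3 * ℓ) * ((3 : ℤ) : ℂ) = 9 * ℓ by push_cast; ring,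
    show (-1 : ℂ) ^ (3 : ℤ) = -1 by norm_num, Complex.exp_zero, theta_neg] at h
  rw [theta_neg]
  linear_combination h / 2

theorem exp_mul_ne_one {ℓ : ℂ} (hℓ : ℓ.re < 0) {n : ℤ} (hn : n ≠ 0) :
    1 - cexp (10 * n * ℓ) ≠ 0 := by
  intro h
  have h1 : ‖cexp (10 * n * ℓ)‖ = 1 := by rw [← sub_eq_zero.1 h, norm_one]
  rw [norm_exp, Real.exp_eq_one_iff] at h1
  have h2 : (10 * (n : ℂ) * ℓ).re = 10 * n * ℓ.re := by
    rw [show 10 * (n : ℂ) * ℓ = ((10 * n : ℝ) : ℂ) * ℓ by push_cast; ring, re_ofReal_mul]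
  rw [h2] at h1
  have : (n : ℝ) ≠ 0 := by exact_mod_cast hn
  simp_all [hℓ.ne]

theorem rankLam_neg_five {ℓ : ℂ} (hℓ : ℓ.re < 0) : rankLam ℓ (-5) = rankLam ℓ 0 - 1 := by
  have h3 : (3 * ℓ).re < 0 := by simp; linarith
  have hθ := (summable_theta h3 (-(9 * ℓ))).hasSum
  have h0 : ∑' n : ℤ, (-1 : ℂ) ^ n * cexp (3 * ℓ * n ^ 2 + -(9 * ℓ) * n) = 0 := theta_neg_nine ℓ
  rw [h0] at hθ
  have h1 := ((summable_rankTerm hℓ 0).hasSum.add hθ).sub (hasSum_ite_eq (0 : ℤ) (1 : ℂ))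
  have h2 := (summable_rankTerm hℓ (-5)).hasSum
  have : rankTerm ℓ (-5) = fun n => rankTerm ℓ 0 n +
      (-1 : ℂ) ^ n * cexp (3 * ℓ * n ^ 2 + -(9 * ℓ) * n) - if n = 0 then 1 else 0 := by
    funext n
    rcases eq_or_ne n 0 with rfl | hn
    · simp [rankTerm]
    have e1 : (3 * (n : ℂ) ^ 2 + n + 2 * (0 : ℤ) * n) * ℓ =
        (3 * ℓ * n ^ 2 + -(9 * ℓ) * n) + 10 * n * ℓ := by push_cast; ring
    have e2 : (3 * (n : ℂ) ^ 2 + n + 2 * (-5 : ℤ) * n) * ℓ =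
        (3 * ℓ * n ^ 2 + -(9 * ℓ) * n) := by push_cast; ring
    have hE := exp_mul_ne_one hℓ hn
    rw [rankTerm, rankTerm, e1, e2, Complex.exp_add _ (10 * n * ℓ), if_neg hn]
    generalize cexp (10 * n * ℓ) = E at *
    generalize cexp (3 * ℓ * n ^ 2 + -(9 * ℓ) * n) = G at *
    field_simp
    ring
  rw [this] at h2
  rw [rankLam, this, h2.unique h1, rankLam]
  ring

/-! ### Invariance under a fifth of a period -/

theorem exp_ten_mul_add (ℓ : ℂ) (k : ℤ) {z z' : ℂ} (h : z = 10 * k * ℓ)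
    (h' : z' = 10 * k * (ℓ + Real.pi * I / 5)) : cexp z' = cexp z := by
  rw [h, h', ← Complex.exp_periodic.int_mul k (10 * k * ℓ)]
  congr 1
  ring

theorem theta_invariant (ℓ : ℂ) {a b : ℤ} (hab : Even (a + b)) {α β α' β' : ℂ}
    (hα : α = 5 * a * ℓ) (hβ : β = 5 * b * ℓ) (hα' : α' = 5 * a * (ℓ + Real.pi * I / 5))
    (hβ' : β' = 5 * b * (ℓ + Real.pi * I / 5)) : theta α' β' = theta α β := by
  refine tsum_congr fun n => ?_
  obtain ⟨k, hk⟩ : Even (a * n ^ 2 + b * n) := by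
    rw [Int.even_add] at hab ⊢
    simp only [Int.even_mul, Int.even_pow]
    tauto
  have hk' : (a : ℂ) * n ^ 2 + b * n = 2 * k := by
    exact_mod_cast hk.trans (two_mul k).symm
  rw [exp_ten_mul_add ℓ k (z := α * n ^ 2 + β * n)]
  · rw [hα, hβ]; linear_combination 5 * ℓ * hk'
  · rw [hα', hβ']; linear_combination 5 * (ℓ + Real.pi * I / 5) * hk'

theorem jac_ten_invariant (ℓ : ℂ) :
    jac (25 * (ℓ + Real.pi * I / 5)) (10 * (ℓ + Real.pi * I / 5)) = jac (25 * ℓ) (10 * ℓ) :=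
  theta_invariant ℓ (a := 5) (b := -3) (by decide) (by push_cast; ring) (by push_cast; ring)
    (by push_cast; ring) (by push_cast; ring)

theorem jac_twenty_invariant (ℓ : ℂ) :
    jac (25 * (ℓ + Real.pi * I / 5)) (20 * (ℓ + Real.pi * I / 5)) = jac (25 * ℓ) (20 * ℓ) :=
  theta_invariant ℓ (a := 5) (b := -1) (by decide) (by push_cast; ring) (by push_cast; ring)
    (by push_cast; ring) (by push_cast; ring)

theorem theta_three_invariant (ℓ : ℂ) :
    theta (3 * (25 * (ℓ + Real.pi * I / 5))) (-(25 * (ℓ + Real.pi * I / 5))) =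
      theta (3 * (25 * ℓ)) (-(25 * ℓ)) :=
  theta_invariant ℓ (a := 15) (b := -5) (by decide) (by push_cast; ring) (by push_cast; ring)
    (by push_cast; ring) (by push_cast; ring)

theorem re_add_pi_mul_I (ℓ : ℂ) : (ℓ + Real.pi * I / 5).re = ℓ.re := by
  have : (Real.pi * I / 5 : ℂ) = ((Real.pi / 5 : ℝ) : ℂ) * I := by push_cast; ring
  rw [this, add_re, re_ofReal_mul, I_re]
  ring

theorem jacQuot_invariant {ℓ : ℂ} (hℓ : ℓ.re < 0) :
    jacQuot (25 * (ℓ + Real.pi * I / 5)) 0 = jacQuot (25 * ℓ) 0 := by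
  have h := hasSum_jacQuot_zero (re_mul_lt_zero hℓ)
  refine (hasSum_jacQuot_zero (re_mul_lt_zero ((re_add_pi_mul_I ℓ).trans_lt hℓ))).unique
    (h.congr_fun fun n => ?_)
  obtain ⟨k, hk⟩ := Int.even_mul_succ_self n
  have hk' : (n : ℂ) * (n + 1) = 2 * k := by exact_mod_cast hk.trans (two_mul k).symm
  rw [exp_ten_mul_add ℓ (5 * k) (z := n * (n + 1) * (25 * ℓ))]
  · push_cast; linear_combination 25 * ℓ * hk'
  · push_cast; linear_combination 25 * (ℓ + Real.pi * I / 5) * hk'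

theorem lam_invariant (ℓ : ℂ) (c : ℤ) :
    lam (25 * (ℓ + Real.pi * I / 5)) (10 * c * (ℓ + Real.pi * I / 5)) 0 =
      lam (25 * ℓ) (10 * c * ℓ) 0 := by
  refine tsum_congr fun n => ?_
  obtain ⟨k, hk⟩ := Int.even_mul_succ_self n
  have hk' : (n : ℂ) * (n + 1) = 2 * k := by exact_mod_cast hk.trans (two_mul k).symm
  have e1 : cexp (n * 0 + 3 * n * (n + 1) * (25 * (ℓ + Real.pi * I / 5))) =
      cexp (n * 0 + 3 * n * (n + 1) * (25 * ℓ)) := by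
    apply exp_ten_mul_add ℓ (15 * k)
    · push_cast; linear_combination 75 * ℓ * hk'
    · push_cast; linear_combination 75 * (ℓ + Real.pi * I / 5) * hk'
  have e2 : cexp (10 * c * (ℓ + Real.pi * I / 5) + 2 * n * (25 * (ℓ + Real.pi * I / 5))) =
      cexp (10 * c * ℓ + 2 * n * (25 * ℓ)) :=
    exp_ten_mul_add ℓ (c + 5 * n) (by push_cast; ring) (by push_cast; ring)
  rw [e1, e2]

/-- `F` is, up to the factor `theta (3ℓ) ℓ`, a combination of `1, q, q², q³` with coefficients
invariant under `q ↦ exp (2πi/5) q`, where `q = exp (2ℓ)`. -/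
def IsFourDissected (F : ℂ → ℂ) : Prop :=
  ∃ g : Fin 4 → ℂ → ℂ, (∀ i ℓ, ℓ.re ≤ -1 → g i (ℓ + Real.pi * I / 5) = g i ℓ) ∧
    ∀ ℓ : ℂ, ℓ.re ≤ -1 → F ℓ = theta (3 * ℓ) ℓ * ∑ i : Fin 4, cexp (2 * ℓ) ^ (i : ℕ) * g i ℓ

theorem exp_pow_five_invariant (ℓ : ℂ) :
    cexp (2 * (ℓ + Real.pi * I / 5)) ^ 5 = cexp (2 * ℓ) ^ 5 := by
  rw [← Complex.exp_nat_mul, ← Complex.exp_nat_mul]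
  exact exp_ten_mul_add ℓ 1 (by push_cast; ring) (by push_cast; ring)

theorem isFourDissected_one : IsFourDissected fun ℓ => rankLam ℓ 1 + 1 / 5 := by
  let A : ℂ → ℂ := fun ℓ => jac (25 * ℓ) (20 * ℓ) / jac (25 * ℓ) (10 * ℓ)
  let θ : ℂ → ℂ := fun ℓ => theta (3 * (25 * ℓ)) (-(25 * ℓ))
  let ϖ : ℂ → ℂ := fun ℓ => jacQuot (25 * ℓ) 0 / jac (25 * ℓ) (20 * ℓ)
  let T : ℂ → ℂ := fun ℓ => lam (25 * ℓ) (20 * ℓ) 0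
  refine ⟨![fun ℓ => ϖ ℓ * A ℓ ^ 2 / (5 * θ ℓ), fun ℓ => ϖ ℓ * A ℓ / (5 * θ ℓ),
    fun ℓ => 2 * ϖ ℓ / (5 * θ ℓ),
    fun ℓ => -2 * ϖ ℓ / (5 * A ℓ * θ ℓ) - cexp (2 * ℓ) ^ 5 * T ℓ / θ ℓ], ?_, ?_⟩
  · intro i ℓ hℓ
    have hA : A (ℓ + Real.pi * I / 5) = A ℓ := by
      simp only [A, jac_ten_invariant, jac_twenty_invariant]
    have hθ : θ (ℓ + Real.pi * I / 5) = θ ℓ := theta_three_invariant ℓ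
    have hϖ : ϖ (ℓ + Real.pi * I / 5) = ϖ ℓ := by
      simp only [ϖ, jacQuot_invariant (by linarith : ℓ.re < 0), jac_twenty_invariant]
    have hT : T (ℓ + Real.pi * I / 5) = T ℓ := by
      have h := lam_invariant ℓ 2
      norm_num at h
      exact h
    fin_cases i <;> simp [hA, hθ, hϖ, hT, exp_pow_five_invariant]
  · intro ℓ hℓ
    beta_reduce
    rw [rankLam_one_dissection hℓ rfl (A := A ℓ) (θ := θ ℓ) (ϖ := ϖ ℓ) (T := T ℓ) rfl rfl rfl rfl,
      Fin.sum_univ_four]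
    simp

theorem isFourDissected_zero : IsFourDissected fun ℓ => rankLam ℓ 0 + 2 / 5 := by
  let A : ℂ → ℂ := fun ℓ => jac (25 * ℓ) (20 * ℓ) / jac (25 * ℓ) (10 * ℓ)
  let θ : ℂ → ℂ := fun ℓ => theta (3 * (25 * ℓ)) (-(25 * ℓ))
  let ϖ : ℂ → ℂ := fun ℓ => jacQuot (25 * ℓ) 0 / jac (25 * ℓ) (10 * ℓ)
  let T : ℂ → ℂ := fun ℓ => lam (25 * ℓ) (40 * ℓ) 0
  refine ⟨![fun ℓ => 2 * ϖ ℓ * A ℓ / (5 * θ ℓ) - cexp (2 * ℓ) ^ 5 * T ℓ / θ ℓ,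
    fun ℓ => 2 * ϖ ℓ / (5 * θ ℓ), fun ℓ => -ϖ ℓ / (5 * A ℓ * θ ℓ),
    fun ℓ => ϖ ℓ / (5 * A ℓ ^ 2 * θ ℓ)], ?_, ?_⟩
  · intro i ℓ hℓ
    have hA : A (ℓ + Real.pi * I / 5) = A ℓ := by
      simp only [A, jac_ten_invariant, jac_twenty_invariant]
    have hθ : θ (ℓ + Real.pi * I / 5) = θ ℓ := theta_three_invariant ℓ
    have hϖ : ϖ (ℓ + Real.pi * I / 5) = ϖ ℓ := by
      simp only [ϖ, jacQuot_invariant (by linarith : ℓ.re < 0), jac_ten_invariant]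
    have hT : T (ℓ + Real.pi * I / 5) = T ℓ := by
      have h := lam_invariant ℓ 4
      norm_num at h
      exact h
    fin_cases i <;> simp [hA, hθ, hϖ, hT, exp_pow_five_invariant]
  · intro ℓ hℓ
    have h := rankLam_neg_five_dissection hℓ rfl (A := A ℓ) (θ := θ ℓ) (ϖ := ϖ ℓ) (T := T ℓ)
      rfl rfl rfl rfl
    rw [rankLam_neg_five (by linarith)] at h
    rw [Fin.sum_univ_four]
    simp only [Matrix.cons_val]
    simp only [Fin.val_zero, Fin.val_one, Fin.val_two, pow_zero, one_mul, pow_one,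
      show ((3 : Fin 4) : ℕ) = 3 from rfl]
    linear_combination h

/-! ### Partitions as multisets of positive integers -/

/-- Partitions of arbitrary size, as multisets of positive integers. -/
abbrev PosMultiset : Type := {M : Multiset ℕ // 0 ∉ M}

/-- Largest part minus number of parts. -/
def PosMultiset.rank (M : PosMultiset) : ℤ := (M.1.sup : ℤ) - (Multiset.card M.1 : ℤ)

theorem sup_mem {M : Multiset ℕ} (hM : M ≠ 0) : M.sup ∈ M := by
  induction M using Multiset.induction with
  | empty => exact absurd rfl hM
  | cons a s ih =>
    rw [Multiset.sup_cons]
    rcases eq_or_ne s 0 with rfl | hs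
    · simp
    · rcases le_total a s.sup with h | h
      · rw [sup_eq_right.2 h]; exact Multiset.mem_cons_of_mem (ih hs)
      · rw [sup_eq_left.2 h]; exact Multiset.mem_cons_self _ _

theorem sup_map_succ {M : Multiset ℕ} (hM : M ≠ 0) : (M.map (· + 1)).sup = M.sup + 1 := by
  apply le_antisymm
  · refine Multiset.sup_le.2 fun b hb => ?_
    obtain ⟨a, ha, rfl⟩ := Multiset.mem_map.1 hb
    exact Nat.succ_le_succ (Multiset.le_sup ha)
  · exact Multiset.le_sup (Multiset.mem_map_of_mem _ (sup_mem hM))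

/-- Decrease every part by one, discarding the zeros. -/
def predParts (M : Multiset ℕ) : Multiset ℕ := (M.map (· - 1)).filter (· ≠ 0)

theorem map_succ_predParts {M : Multiset ℕ} (hM : 0 ∉ M) :
    (predParts M).map (· + 1) + Multiset.replicate (Multiset.card M - Multiset.card (predParts M)) 1
      = M ∧ Multiset.card (predParts M) ≤ Multiset.card M := by
  induction M using Multiset.induction with
  | empty => simp [predParts]
  | cons a s ih =>
    rw [Multiset.mem_cons, not_or] at hM
    obtain ⟨h1, h2⟩ := ih hM.2
    rcases Nat.lt_or_ge 1 a with ha | ha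
    · have e : predParts (a ::ₘ s) = (a - 1) ::ₘ predParts s := by
        rw [predParts, Multiset.map_cons, Multiset.filter_cons_of_pos _ (by omega), predParts]
      rw [e, Multiset.map_cons, Multiset.card_cons, Multiset.card_cons, Multiset.cons_add,
        Nat.add_sub_add_right, h1, Nat.sub_add_cancel ha.le]
      exact ⟨rfl, by omega⟩
    · obtain rfl : a = 1 := by omega
      have e : predParts (1 ::ₘ s) = predParts s := by
        rw [predParts, Multiset.map_cons, Multiset.filter_cons_of_neg _ (by simp), predParts]
      rw [e, Multiset.card_cons, Nat.succ_sub h2, Multiset.replicate_succ, Multiset.add_cons, h1]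
      exact ⟨rfl, by omega⟩

theorem predParts_map_succ {M : Multiset ℕ} (hM : 0 ∉ M) (k : ℕ) :
    predParts (M.map (· + 1) + Multiset.replicate k 1) = M := by
  rw [predParts, Multiset.map_add, Multiset.map_map, Multiset.filter_add, Multiset.map_replicate]
  have e1 : (M.map ((· - 1) ∘ (· + 1))) = M := by
    conv_rhs => rw [← Multiset.map_id M]
    exact Multiset.map_congr rfl fun _ _ => rfl
  have e2 : (Multiset.replicate k (1 - 1)).filter (· ≠ 0) = 0 :=
    Multiset.filter_eq_nil.2 fun a ha => by simp [Multiset.eq_of_mem_replicate ha]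
  rw [e1, e2, add_zero]
  exact Multiset.filter_eq_self.2 fun a ha h => hM (h ▸ ha)

/-- Removing the first column of a partition. -/
def removeColumn : PosMultiset ≃ {p : PosMultiset × ℕ // Multiset.card p.1.1 ≤ p.2} where
  toFun M := ⟨⟨⟨predParts M.1, by simp [predParts]⟩, Multiset.card M.1⟩,
    (map_succ_predParts M.2).2⟩
  invFun p := ⟨p.1.1.1.map (· + 1) +
      Multiset.replicate (p.1.2 - Multiset.card p.1.1.1) 1, by
    simp [Multiset.mem_replicate]⟩
  left_inv M := Subtype.ext (map_succ_predParts M.2).1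
  right_inv p := by
    obtain ⟨⟨⟨M, hM⟩, k⟩, h⟩ := p
    refine Subtype.ext (Prod.ext (Subtype.ext (predParts_map_succ hM _)) ?_)
    change Multiset.card M ≤ k at h
    simp
    omega

/-- Removing the largest part of a partition. -/
def removeRow : PosMultiset ≃ {p : PosMultiset × ℕ // p.1.1.sup ≤ p.2} where
  toFun M := ⟨⟨⟨M.1.erase M.1.sup, fun h => M.2 (Multiset.mem_of_mem_erase h)⟩, M.1.sup⟩,
    Multiset.sup_mono fun _ h => Multiset.mem_of_mem_erase h⟩
  invFun p := if h : p.1.2 = 0 then ⟨0, by simp⟩ else ⟨p.1.2 ::ₘ p.1.1.1, by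
    rw [Multiset.mem_cons, not_or]; exact ⟨Ne.symm h, p.1.1.2⟩⟩
  left_inv M := by
    obtain ⟨M, hM⟩ := M
    rcases eq_or_ne M 0 with rfl | h0
    · simp
    · have h := sup_mem h0
      have h1 : M.sup ≠ 0 := fun h2 => hM (h2 ▸ h)
      simp only [dif_neg h1]
      exact Subtype.ext (Multiset.cons_erase h)
  right_inv p := by
    obtain ⟨⟨⟨M, hM⟩, k⟩, h⟩ := p
    change M.sup ≤ k at h
    rcases eq_or_ne k 0 with rfl | hk
    · have : M = 0 := by
        by_contra h0
        exact hM ((Nat.le_zero.1 h) ▸ sup_mem h0)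
      subst this
      simp
    · have hs : (k ::ₘ M).sup = k := by rw [Multiset.sup_cons, sup_eq_left.2 h]
      simp only [dif_neg hk]
      refine Subtype.ext (Prod.ext (Subtype.ext ?_) hs)
      simp only [hs, Multiset.erase_cons_head]

theorem tsum_removeColumn (F : PosMultiset × ℕ → ℂ) :
    ∑' M, F (removeColumn M) = ∑' p : PosMultiset × ℕ,
      if Multiset.card p.1.1 ≤ p.2 then F p else 0 := by
  rw [removeColumn.tsum_eq (fun p => F p.1)]
  exact (tsum_subtype {p : PosMultiset × ℕ | Multiset.card p.1.1 ≤ p.2} F).trans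
    (tsum_congr fun p => by simp [Set.indicator_apply])

theorem tsum_removeRow (F : PosMultiset × ℕ → ℂ) :
    ∑' M, F (removeRow M) = ∑' p : PosMultiset × ℕ, if p.1.1.sup ≤ p.2 then F p else 0 := by
  rw [removeRow.tsum_eq (fun p => F p.1)]
  exact (tsum_subtype {p : PosMultiset × ℕ | p.1.1.sup ≤ p.2} F).trans
    (tsum_congr fun p => by simp [Set.indicator_apply])

theorem tsum_shift (F : PosMultiset × ℕ → ℂ) (m : ℕ) (hF : ∀ M a, a < m → F (M, a) = 0) :
    ∑' p, F p = ∑' p : PosMultiset × ℕ, F (p.1, p.2 + m) := by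
  have hi : Function.Injective fun p : PosMultiset × ℕ => (p.1, p.2 + m) := by
    rintro ⟨M, a⟩ ⟨N, b⟩ h
    simpa using h
  refine (hi.tsum_eq fun p hp => ?_).symm
  obtain ⟨M, a⟩ := p
  refine ⟨(M, a - m), Prod.ext rfl ?_⟩
  exact Nat.sub_add_cancel (not_lt.1 fun h => hp (hF M a h))

/-- The relations between a partition and what remains after removing the first column. -/
theorem removeColumn_spec {M : PosMultiset} :
    (removeColumn M).1.2 = Multiset.card M.1 ∧
    (removeColumn M).1.1.1.sum + Multiset.card M.1 = M.1.sum ∧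
    (M.1 ≠ 0 → M.1.sup = (removeColumn M).1.1.1.sup + 1) := by
  obtain ⟨M, hM⟩ := M
  have h := map_succ_predParts hM
  refine ⟨rfl, ?_, fun h0 => ?_⟩
  · change (predParts M).sum + Multiset.card M = M.sum
    have h1 := congrArg Multiset.sum h.1
    rw [Multiset.sum_add, Multiset.sum_map_add, Multiset.map_id', Multiset.map_const',
      Multiset.sum_replicate, Multiset.sum_replicate, smul_eq_mul, smul_eq_mul] at h1
    have := h.2
    omega
  · change M.sup = (predParts M).sup + 1
    change M ≠ 0 at h0
    have h1 := congrArg Multiset.sup h.1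
    rw [Multiset.sup_add] at h1
    rcases eq_or_ne (predParts M) 0 with hp | hp
    · rw [hp] at h1 ⊢
      have hc := Multiset.card_pos.2 h0
      obtain ⟨k, hk⟩ := Nat.exists_eq_succ_of_ne_zero hc.ne'
      rw [← h1, Multiset.card_zero, hk, Nat.sub_zero, Multiset.replicate_succ]
      have : (Multiset.replicate k 1).sup ≤ 1 :=
        Multiset.sup_le.2 fun a ha => (Multiset.eq_of_mem_replicate ha).le
      simpa using this
    · rw [sup_map_succ hp] at h1
      rw [← h1]
      refine sup_eq_left.2 (Multiset.sup_le.2 fun a ha => ?_)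
      rw [Multiset.eq_of_mem_replicate ha]
      omega

/-- The relations between a partition and what remains after removing the largest part. -/
theorem removeRow_spec {M : PosMultiset} :
    (removeRow M).1.2 = M.1.sup ∧
    (removeRow M).1.1.1.sum + M.1.sup = M.1.sum ∧
    (M.1 ≠ 0 → Multiset.card M.1 = Multiset.card (removeRow M).1.1.1 + 1) := by
  obtain ⟨M, hM⟩ := M
  refine ⟨rfl, ?_, fun h0 => ?_⟩
  · change (M.erase M.sup).sum + M.sup = M.sum
    rcases eq_or_ne M 0 with rfl | h0
    · simp
    · rw [add_comm]; exact Multiset.sum_erase (sup_mem h0)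
  · change Multiset.card M = Multiset.card (M.erase M.sup) + 1
    exact (Multiset.card_erase_add_one (sup_mem h0)).symm

/-- Partitions of all integers as multisets of positive integers. -/
def sigmaPartitionEquiv : (Σ n, Nat.Partition n) ≃ PosMultiset where
  toFun p := ⟨p.2.parts, fun h => lt_irrefl _ (p.2.parts_pos h)⟩
  invFun M := ⟨M.1.sum, ⟨M.1, fun {i} h => Nat.pos_of_ne_zero fun h0 => M.2 (h0 ▸ h), rfl⟩⟩
  left_inv := by
    rintro ⟨_, ⟨M, h, rfl⟩⟩
    rfl
  right_inv _ := rfl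

theorem card_partition_le (n : ℕ) : Fintype.card (Nat.Partition n) ≤ 2 ^ n := by
  refine (Fintype.card_le_of_surjective _ Nat.Partition.ofComposition_surj).trans ?_
  rw [composition_card]
  exact Nat.pow_le_pow_right (by norm_num) (Nat.sub_le n 1)

theorem summable_pow_sum {q : ℂ} (hq : ‖q‖ < 1 / 2) :
    Summable fun M : PosMultiset => q ^ M.1.sum := by
  rw [← sigmaPartitionEquiv.summable_iff]
  refine Summable.of_norm ?_
  rw [summable_sigma_of_nonneg fun _ => norm_nonneg _]
  refine ⟨fun n => Summable.of_finite, ?_⟩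
  have hg : Summable fun n : ℕ => (2 * ‖q‖) ^ n :=
    summable_geometric_of_lt_one (by positivity) (by linarith)
  refine hg.of_nonneg_of_le (fun n => tsum_nonneg fun _ => norm_nonneg _) fun n => ?_
  have e : ∀ π : Nat.Partition n,
      ‖((fun M : PosMultiset => q ^ M.1.sum) ∘ sigmaPartitionEquiv) ⟨n, π⟩‖ = ‖q‖ ^ n := by
    intro π
    change ‖q ^ π.parts.sum‖ = _
    rw [π.parts_sum, norm_pow]
  rw [tsum_congr e, tsum_fintype, Finset.sum_const, Finset.card_univ, nsmul_eq_mul, mul_pow]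
  gcongr
  exact_mod_cast card_partition_le n

theorem summable_ite_pow_sum {q : ℂ} (hq : ‖q‖ < 1 / 2) (p : PosMultiset → Prop)
    [DecidablePred p] : Summable fun M : PosMultiset => if p M then q ^ M.1.sum else 0 := by
  refine Summable.of_norm_bounded (summable_pow_sum hq).norm fun M => ?_
  split_ifs <;> simp

/-- The generating function of all partitions. -/
noncomputable def partGen (q : ℂ) : ℂ := ∑' M : PosMultiset, q ^ M.1.sum

open Classical in
/-- The generating function of nonempty partitions whose statistic `r` is at least `m`. -/
noncomputable def tailGen (r : PosMultiset → ℤ) (q : ℂ) (m : ℕ) : ℂ :=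
  ∑' M : PosMultiset, if M.1 ≠ 0 ∧ (m : ℤ) ≤ r M then q ^ M.1.sum else 0

open Classical in
theorem partGen_sub_tailGen {q : ℂ} (hq : ‖q‖ < 1 / 2) (r : PosMultiset → ℤ) (m : ℕ) :
    partGen q - tailGen r q m =
      ∑' M : PosMultiset, if M.1 ≠ 0 ∧ (m : ℤ) ≤ r M then 0 else q ^ M.1.sum := by
  rw [partGen, tailGen, ← (summable_pow_sum hq).tsum_sub (summable_ite_pow_sum hq _)]
  exact tsum_congr fun M => by split_ifs <;> simp

theorem tailGen_rank {q : ℂ} (hq : ‖q‖ < 1 / 2) (m : ℕ) :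
    tailGen PosMultiset.rank q m =
      q ^ (m + 1) * (partGen q - tailGen PosMultiset.rank q (m + 3)) := by
  classical
  have h1 : tailGen PosMultiset.rank q m = ∑' M : PosMultiset,
      (fun p : PosMultiset × ℕ => if Multiset.card p.1.1 + (m + 1) ≤ p.2
        then q ^ (p.1.1.sum + p.2) else 0) (removeRow M) := by
    refine tsum_congr fun M => ?_
    obtain ⟨s1, s2, s3⟩ := removeRow_spec (M := M)
    rcases eq_or_ne M.1 0 with h0 | h0
    · have hs : M.1.sup = 0 := by rw [h0]; rfl
      refine (if_neg fun h => h.1 h0).trans (if_neg ?_).symm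
      rw [s1, hs]
      omega
    · have := s3 h0
      refine if_congr ?_ (by rw [s1, s2]) rfl
      rw [s1, PosMultiset.rank]
      refine ⟨fun h => ?_, fun h => ⟨h0, ?_⟩⟩ <;> omega
  have h2 : partGen q - tailGen PosMultiset.rank q (m + 3) = ∑' M : PosMultiset,
      (fun p : PosMultiset × ℕ => if p.1.1.sup ≤ p.2 + (m + 1)
        then q ^ (p.1.1.sum + p.2) else 0) (removeColumn M) := by
    rw [partGen_sub_tailGen hq]
    refine tsum_congr fun M => ?_
    obtain ⟨s1, s2, s3⟩ := removeColumn_spec (M := M)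
    rw [← ite_not]
    refine if_congr ?_ (by rw [s1, s2]) rfl
    rw [s1, PosMultiset.rank, not_and_or, not_not]
    rcases eq_or_ne M.1 0 with h0 | h0
    · have h4 : (removeColumn M).1.1.1 = 0 := by
        change predParts M.1 = 0
        rw [h0]; rfl
      rw [h4]
      simp [h0]
    · have := s3 h0
      refine ⟨fun h => ?_, fun h => Or.inr ?_⟩
      · have := h.resolve_left h0
        omega
      · omega
  have h3 := h1.trans <| tsum_removeRow (fun p : PosMultiset × ℕ =>
    if Multiset.card p.1.1 + (m + 1) ≤ p.2 then q ^ (p.1.1.sum + p.2) else 0)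
  have h4 := h2.trans <| tsum_removeColumn (fun p : PosMultiset × ℕ =>
    if p.1.1.sup ≤ p.2 + (m + 1) then q ^ (p.1.1.sum + p.2) else 0)
  rw [h3, h4, tsum_shift _ (m + 1), ← tsum_mul_left]
  · refine tsum_congr fun p => ?_
    by_cases ha : p.1.1.sup ≤ p.2 + (m + 1) <;> by_cases hb : Multiset.card p.1.1 ≤ p.2 <;>
      simp [ha, hb, pow_add]
    ring
  · intro M a ha
    split_ifs
    · omega
    · rfl
    · rfl

theorem tailGen_neg_rank {q : ℂ} (hq : ‖q‖ < 1 / 2) (m : ℕ) :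
    tailGen (-PosMultiset.rank) q m =
      q ^ (m + 1) * (partGen q - tailGen (-PosMultiset.rank) q (m + 3)) := by
  classical
  have h1 : tailGen (-PosMultiset.rank) q m = ∑' M : PosMultiset,
      (fun p : PosMultiset × ℕ => if p.1.1.sup + (m + 1) ≤ p.2
        then q ^ (p.1.1.sum + p.2) else 0) (removeColumn M) := by
    refine tsum_congr fun M => ?_
    obtain ⟨s1, s2, s3⟩ := removeColumn_spec (M := M)
    rcases eq_or_ne M.1 0 with h0 | h0
    · have hs : Multiset.card M.1 = 0 := by rw [h0]; rfl
      refine (if_neg fun h => h.1 h0).trans (if_neg ?_).symm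
      rw [s1, hs]
      omega
    · have := s3 h0
      refine if_congr ?_ (by rw [s1, s2]) rfl
      rw [s1, Pi.neg_apply, PosMultiset.rank]
      refine ⟨fun h => ?_, fun h => ⟨h0, ?_⟩⟩ <;> omega
  have h2 : partGen q - tailGen (-PosMultiset.rank) q (m + 3) = ∑' M : PosMultiset,
      (fun p : PosMultiset × ℕ => if Multiset.card p.1.1 ≤ p.2 + (m + 1)
        then q ^ (p.1.1.sum + p.2) else 0) (removeRow M) := by
    rw [partGen_sub_tailGen hq]
    refine tsum_congr fun M => ?_
    obtain ⟨s1, s2, s3⟩ := removeRow_spec (M := M)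
    rw [← ite_not]
    refine if_congr ?_ (by rw [s1, s2]) rfl
    rw [s1, Pi.neg_apply, PosMultiset.rank, not_and_or, not_not]
    rcases eq_or_ne M.1 0 with h0 | h0
    · have h4 : (removeRow M).1.1.1 = 0 := by
        change M.1.erase M.1.sup = 0
        rw [h0]; rfl
      rw [h4]
      simp [h0]
    · have := s3 h0
      refine ⟨fun h => ?_, fun h => Or.inr ?_⟩
      · have := h.resolve_left h0
        omega
      · omega
  have h3 := h1.trans <| tsum_removeColumn (fun p : PosMultiset × ℕ =>
    if p.1.1.sup + (m + 1) ≤ p.2 then q ^ (p.1.1.sum + p.2) else 0)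
  have h4 := h2.trans <| tsum_removeRow (fun p : PosMultiset × ℕ =>
    if Multiset.card p.1.1 ≤ p.2 + (m + 1) then q ^ (p.1.1.sum + p.2) else 0)
  rw [h3, h4, tsum_shift _ (m + 1), ← tsum_mul_left]
  · refine tsum_congr fun p => ?_
    by_cases ha : p.1.1.sup ≤ p.2 <;> by_cases hb : Multiset.card p.1.1 ≤ p.2 + (m + 1) <;>
      simp [ha, hb, pow_add]
    ring
  · intro M a ha
    split_ifs
    · omega
    · rfl
    · rfl

theorem norm_exp_two_mul_lt {ℓ : ℂ} (hℓ : ℓ.re ≤ -1) : ‖cexp (2 * ℓ)‖ < 1 / 2 := by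
  rw [Complex.norm_exp]
  have h : (2 * ℓ).re ≤ -1 := by simp; linarith
  have := Real.exp_neg_one_lt_d9
  linarith [Real.exp_le_exp.2 h]

/-- The terms `(-1)^n q^(N(3N-1)/2)` of the pentagonal series, `N = n + 1`, `q = exp (2ℓ)`. -/
noncomputable def pentTerm (ℓ : ℂ) (n : ℕ) : ℂ :=
  (-1) ^ n * cexp ((3 * (n + 1) ^ 2 - (n + 1)) * ℓ)

theorem summable_norm_pentTerm {ℓ : ℂ} (hℓ : ℓ.re < 0) : Summable fun n => ‖pentTerm ℓ n‖ := by
  have h3 : (3 * ℓ).re < 0 := by simp; linarith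
  have hi : Function.Injective fun n : ℕ => (n : ℤ) + 1 := fun a b h => by simpa using h
  refine ((summable_theta h3 (-ℓ)).norm.comp_injective hi).congr fun n => ?_
  have e : 3 * ℓ * (((n : ℤ) + 1 : ℤ) : ℂ) ^ 2 + -ℓ * ((n : ℤ) + 1 : ℤ) =
      (3 * (n + 1) ^ 2 - (n + 1)) * ℓ := by push_cast; ring
  simp only [Function.comp_apply, pentTerm, norm_mul, norm_pow, norm_zpow, norm_neg, norm_one,
    one_pow, one_zpow, e]

theorem norm_pow_succ_le {q : ℂ} (hq : ‖q‖ < 1 / 2) (n : ℕ) : ‖q ^ (n + 1)‖ ≤ 1 / 2 := by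
  rw [norm_pow, pow_succ]
  nlinarith [pow_le_one₀ (norm_nonneg q) (by linarith : ‖q‖ ≤ 1) (n := n), norm_nonneg q,
    pow_nonneg (norm_nonneg q) n]

/-- The generating function of partitions with rank at least `m`, divided by that of all
partitions. -/
noncomputable def pentTail (ℓ : ℂ) (m : ℕ) : ℂ :=
  ∑' n, pentTerm ℓ n * (cexp (2 * ℓ) ^ (n + 1)) ^ m

theorem norm_pentTerm_mul_pow_le {ℓ : ℂ} (hℓ : ℓ.re ≤ -1) (m n : ℕ) :
    ‖pentTerm ℓ n * (cexp (2 * ℓ) ^ (n + 1)) ^ m‖ ≤ ‖pentTerm ℓ n‖ := by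
  rw [norm_mul, norm_pow]
  refine mul_le_of_le_one_right (norm_nonneg _) (pow_le_one₀ (norm_nonneg _) ?_)
  linarith [norm_pow_succ_le (norm_exp_two_mul_lt hℓ) n]

theorem summable_pentTail {ℓ : ℂ} (hℓ : ℓ.re ≤ -1) (m : ℕ) :
    Summable fun n => pentTerm ℓ n * (cexp (2 * ℓ) ^ (n + 1)) ^ m :=
  Summable.of_norm_bounded (summable_norm_pentTerm (by linarith)) (norm_pentTerm_mul_pow_le hℓ m)

theorem norm_pentTail_le {ℓ : ℂ} (hℓ : ℓ.re ≤ -1) (m : ℕ) :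
    ‖pentTail ℓ m‖ ≤ ∑' n, ‖pentTerm ℓ n‖ :=
  tsum_of_norm_bounded (summable_norm_pentTerm (by linarith : ℓ.re < 0)).hasSum
    (norm_pentTerm_mul_pow_le hℓ m)

theorem pentTerm_succ (ℓ : ℂ) (n : ℕ) :
    pentTerm ℓ (n + 1) = -pentTerm ℓ n * cexp (2 * ℓ) ^ (3 * n + 4) := by
  rw [pentTerm, pentTerm, ← Complex.exp_nat_mul, pow_succ]
  have e : (3 * (((n + 1 : ℕ) : ℂ) + 1) ^ 2 - (((n + 1 : ℕ) : ℂ) + 1)) * ℓ =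
      (3 * ((n : ℂ) + 1) ^ 2 - (n + 1)) * ℓ + ((3 * n + 4 : ℕ) : ℂ) * (2 * ℓ) := by
    push_cast; ring
  rw [e, Complex.exp_add]
  ring

theorem pentTail_eq {ℓ : ℂ} (hℓ : ℓ.re ≤ -1) (m : ℕ) :
    pentTail ℓ m = cexp (2 * ℓ) ^ (m + 1) * (1 - pentTail ℓ (m + 3)) := by
  rw [pentTail, (summable_pentTail hℓ m).tsum_eq_zero_add, pentTail, mul_sub, ← tsum_mul_left,
    sub_eq_add_neg, ← tsum_neg]
  congr 1
  · have e : (3 * (((0 : ℕ) : ℂ) + 1) ^ 2 - (((0 : ℕ) : ℂ) + 1)) * ℓ = 2 * ℓ := by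
      push_cast; ring
    rw [pentTerm, e]
    ring
  · refine tsum_congr fun n => ?_
    rw [pentTerm_succ]
    ring

theorem norm_tailGen_le {q : ℂ} (hq : ‖q‖ < 1 / 2) (r : PosMultiset → ℤ) (m : ℕ) :
    ‖tailGen r q m‖ ≤ ∑' M : PosMultiset, ‖q ^ M.1.sum‖ := by
  classical
  refine tsum_of_norm_bounded (summable_pow_sum hq).norm.hasSum fun M => ?_
  split_ifs <;> simp

theorem eq_zero_of_contraction {q : ℂ} (hq : ‖q‖ < 1 / 2) {D : ℕ → ℂ} {B : ℝ}
    (hB : ∀ m, ‖D m‖ ≤ B) (hD : ∀ m, D m = -(q ^ (m + 1) * D (m + 3))) (m : ℕ) : D m = 0 := by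
  have key : ∀ k m, ‖D m‖ ≤ (1 / 2) ^ k * B := by
    intro k
    induction k with
    | zero => simpa using hB
    | succ k ih =>
      intro m
      rw [hD m, norm_neg, norm_mul, pow_succ (1 / 2 : ℝ)]
      have h1 := norm_pow_succ_le hq m
      have h2 := ih (m + 3)
      nlinarith [norm_nonneg (D (m + 3)), norm_nonneg (q ^ (m + 1))]
  have hl : Tendsto (fun k : ℕ => (1 / 2 : ℝ) ^ k * B) atTop (𝓝 0) := by
    simpa using (tendsto_pow_atTop_nhds_zero_of_lt_one (r := (1 / 2 : ℝ)) (by norm_num)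
      (by norm_num)).mul_const B
  exact norm_le_zero_iff.1 (ge_of_tendsto' hl fun k => key k m)

theorem tailGen_eq {ℓ : ℂ} (hℓ : ℓ.re ≤ -1) {r : PosMultiset → ℤ}
    (hr : ∀ m, tailGen r (cexp (2 * ℓ)) m = cexp (2 * ℓ) ^ (m + 1) *
      (partGen (cexp (2 * ℓ)) - tailGen r (cexp (2 * ℓ)) (m + 3))) (m : ℕ) :
    tailGen r (cexp (2 * ℓ)) m = partGen (cexp (2 * ℓ)) * pentTail ℓ m := by
  have hq := norm_exp_two_mul_lt hℓ
  rw [← sub_eq_zero]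
  refine eq_zero_of_contraction (D := fun m => tailGen r (cexp (2 * ℓ)) m -
    partGen (cexp (2 * ℓ)) * pentTail ℓ m) hq (fun m => ?_) (fun m => ?_) m
    (B := ∑' M : PosMultiset, ‖cexp (2 * ℓ) ^ M.1.sum‖ +
      ‖partGen (cexp (2 * ℓ))‖ * ∑' n, ‖pentTerm ℓ n‖)
  · refine (norm_sub_le _ _).trans (add_le_add (norm_tailGen_le hq r m) ?_)
    rw [norm_mul]
    exact mul_le_mul_of_nonneg_left (norm_pentTail_le hℓ m) (norm_nonneg _)
  · rw [hr m, pentTail_eq hℓ m]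
    ring

theorem theta_eq_one_sub_pentTail {ℓ : ℂ} (hℓ : ℓ.re ≤ -1) :
    theta (3 * ℓ) ℓ = 1 - pentTail ℓ 0 - pentTail ℓ 1 := by
  have h := HasSum.of_add_one_of_neg_add_one
    (f := fun n : ℤ => (-1 : ℂ) ^ n * cexp (3 * ℓ * n ^ 2 + ℓ * n))
    ((summable_pentTail hℓ 1).hasSum.neg.congr_fun fun n => ?_)
    ((summable_pentTail hℓ 0).hasSum.neg.congr_fun fun n => ?_)
  · rw [theta, h.tsum_eq, pentTail, pentTail]
    simp
    ring
  · rw [pentTerm, ← Complex.exp_nat_mul, pow_one, mul_assoc ((-1) ^ n), ← Complex.exp_add]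
    have e : ((-1 : ℂ)) ^ ((n : ℤ) + 1) = -(-1) ^ n := by
      rw [zpow_add₀ (by norm_num)]; simp
    rw [e, neg_mul]
    congr 3
    push_cast; ring
  · rw [pentTerm, pow_zero, mul_one]
    have e : ((-1 : ℂ)) ^ (-((n : ℤ) + 1)) = -(-1) ^ n := by
      rw [zpow_neg, zpow_add₀ (by norm_num), mul_inv, ← inv_zpow]
      simp
    rw [e, neg_mul]
    congr 3
    push_cast; ring

theorem partGen_mul_theta {ℓ : ℂ} (hℓ : ℓ.re ≤ -1) :
    partGen (cexp (2 * ℓ)) * theta (3 * ℓ) ℓ = 1 := by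
  classical
  have hq := norm_exp_two_mul_lt hℓ
  have h : partGen (cexp (2 * ℓ)) = 1 + tailGen PosMultiset.rank (cexp (2 * ℓ)) 0 +
      tailGen (-PosMultiset.rank) (cexp (2 * ℓ)) 1 := by
    have h0 : HasSum (fun M : PosMultiset => if M = ⟨0, by simp⟩ then (1 : ℂ) else 0) 1 :=
      hasSum_ite_eq _ _
    rw [partGen, ← h0.tsum_eq, tailGen, tailGen,
      ← h0.summable.tsum_add (summable_ite_pow_sum hq _),
      ← (h0.summable.add (summable_ite_pow_sum hq _)).tsum_add (summable_ite_pow_sum hq _)]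
    refine tsum_congr fun M => ?_
    obtain ⟨M, hM⟩ := M
    rcases eq_or_ne M 0 with rfl | h0
    · simp
    · by_cases h1 : 0 ≤ PosMultiset.rank ⟨M, hM⟩
      · have h2 : ¬ 1 ≤ -PosMultiset.rank ⟨M, hM⟩ := by omega
        simp [h0, h1, h2]
      · have h2 : 1 ≤ -PosMultiset.rank ⟨M, hM⟩ := by omega
        simp [h0, h1, h2]
  rw [tailGen_eq hℓ (tailGen_rank hq), tailGen_eq hℓ (tailGen_neg_rank hq)] at h
  rw [theta_eq_one_sub_pentTail hℓ]
  linear_combination h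

/-- The terms of the series for partitions with rank at least `m` and congruent to `m`
modulo five. -/
noncomputable def classTerm (ℓ : ℂ) (m n : ℕ) : ℂ :=
  pentTerm ℓ n * (cexp (2 * ℓ) ^ (n + 1)) ^ m *
    ((1 - cexp (2 * ℓ) ^ (n + 1)) / (1 - (cexp (2 * ℓ) ^ (n + 1)) ^ 5))

theorem norm_sub_div_sub_le {w : ℂ} (hw : ‖w‖ ≤ 1 / 2) : ‖(1 - w) / (1 - w ^ 5)‖ ≤ 3 := by
  have h5 : ‖w ^ 5‖ ≤ 1 / 2 := by
    rw [norm_pow, pow_succ]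
    nlinarith [pow_le_one₀ (norm_nonneg w) (by linarith : ‖w‖ ≤ 1) (n := 4), norm_nonneg w]
  have h1 : ‖1 - w‖ ≤ 3 / 2 := (norm_sub_le _ _).trans (by rw [norm_one]; linarith)
  have h2 : 1 / 2 ≤ ‖1 - w ^ 5‖ := by
    have := norm_sub_norm_le (1 : ℂ) (w ^ 5)
    rw [norm_one] at this
    linarith
  rw [norm_div, div_le_iff₀ (by linarith)]
  linarith

theorem one_sub_pow_five_ne_zero {w : ℂ} (hw : ‖w‖ ≤ 1 / 2) : 1 - w ^ 5 ≠ 0 := by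
  intro h
  have h5 : ‖w ^ 5‖ < 1 := by
    rw [norm_pow]
    exact pow_lt_one₀ (norm_nonneg w) (by linarith) (by norm_num)
  rw [← sub_eq_zero.1 h, norm_one] at h5
  exact lt_irrefl _ h5

theorem norm_classTerm_le {ℓ : ℂ} (hℓ : ℓ.re ≤ -1) (m n : ℕ) :
    ‖classTerm ℓ m n‖ ≤ ‖pentTerm ℓ n‖ * 3 := by
  rw [classTerm, norm_mul]
  exact mul_le_mul (norm_pentTerm_mul_pow_le hℓ m n)
    (norm_sub_div_sub_le (norm_pow_succ_le (norm_exp_two_mul_lt hℓ) n)) (norm_nonneg _)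
    (norm_nonneg _)

theorem summable_classTerm {ℓ : ℂ} (hℓ : ℓ.re ≤ -1) (m : ℕ) : Summable (classTerm ℓ m) :=
  Summable.of_norm_bounded ((summable_norm_pentTerm (by linarith)).mul_right 3)
    (norm_classTerm_le hℓ m)

theorem tendsto_add_five_mul (m : ℕ) : Tendsto (fun k => m + 5 * k) atTop atTop :=
  tendsto_atTop_mono (fun k => by omega : ∀ k, k ≤ m + 5 * k) tendsto_id

theorem tendsto_tsum_classTerm {ℓ : ℂ} (hℓ : ℓ.re ≤ -1) :
    Tendsto (fun m => ∑' n, classTerm ℓ m n) atTop (𝓝 0) := by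
  have h := tendsto_tsum_of_dominated_convergence (𝓕 := atTop) (f := classTerm ℓ)
    (g := fun _ => (0 : ℂ)) ((summable_norm_pentTerm (by linarith : ℓ.re < 0)).mul_right 3)
    (fun n => ?_) (Eventually.of_forall fun m => norm_classTerm_le hℓ m)
  · simpa using h
  · have hw := norm_pow_succ_le (norm_exp_two_mul_lt hℓ) n
    have := ((tendsto_pow_atTop_nhds_zero_of_norm_lt_one (by linarith :
      ‖cexp (2 * ℓ) ^ (n + 1)‖ < 1)).const_mul (pentTerm ℓ n)).mul_const
      ((1 - cexp (2 * ℓ) ^ (n + 1)) / (1 - (cexp (2 * ℓ) ^ (n + 1)) ^ 5))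
    simpa only [mul_zero, zero_mul, classTerm] using this

theorem tsum_classTerm_sub {ℓ : ℂ} (hℓ : ℓ.re ≤ -1) (m : ℕ) :
    ∑' n, classTerm ℓ m n - ∑' n, classTerm ℓ (m + 5) n = pentTail ℓ m - pentTail ℓ (m + 1) := by
  rw [pentTail, pentTail, ← (summable_classTerm hℓ m).tsum_sub (summable_classTerm hℓ _),
    ← (summable_pentTail hℓ m).tsum_sub (summable_pentTail hℓ _)]
  refine tsum_congr fun n => ?_
  have h := one_sub_pow_five_ne_zero (norm_pow_succ_le (norm_exp_two_mul_lt hℓ) n)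
  rw [classTerm, classTerm]
  generalize cexp (2 * ℓ) ^ (n + 1) = w at *
  field_simp
  ring

open Classical in
/-- The generating function of nonempty partitions whose statistic `r` is at least `m` and
congruent to `m` modulo five. -/
noncomputable def classGen (r : PosMultiset → ℤ) (q : ℂ) (m : ℕ) : ℂ :=
  ∑' M : PosMultiset, if M.1 ≠ 0 ∧ (m : ℤ) ≤ r M ∧ (5 : ℤ) ∣ r M - m then q ^ M.1.sum else 0

theorem tendsto_classGen {q : ℂ} (hq : ‖q‖ < 1 / 2) (r : PosMultiset → ℤ) :
    Tendsto (classGen r q) atTop (𝓝 0) := by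
  classical
  have h := tendsto_tsum_of_dominated_convergence (𝓕 := atTop)
    (f := fun (m : ℕ) (M : PosMultiset) =>
      if M.1 ≠ 0 ∧ (m : ℤ) ≤ r M ∧ (5 : ℤ) ∣ r M - m then q ^ M.1.sum else 0)
    (g := fun _ => (0 : ℂ)) (summable_pow_sum hq).norm (fun M => ?_)
    (Eventually.of_forall fun m M => ?_)
  · rw [tsum_zero] at h
    exact h
  · refine tendsto_const_nhds.congr' ?_
    filter_upwards [eventually_gt_atTop (r M).toNat] with m hm
    rw [if_neg]
    omega
  · split_ifs <;> simp

theorem classGen_sub {q : ℂ} (hq : ‖q‖ < 1 / 2) (r : PosMultiset → ℤ) (m : ℕ) :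
    classGen r q m - classGen r q (m + 5) = tailGen r q m - tailGen r q (m + 1) := by
  classical
  rw [classGen, classGen, tailGen, tailGen,
    ← (summable_ite_pow_sum hq _).tsum_sub (summable_ite_pow_sum hq _),
    ← (summable_ite_pow_sum hq _).tsum_sub (summable_ite_pow_sum hq _)]
  refine tsum_congr fun M => ?_
  rcases lt_trichotomy (r M) m with h | h | h
  · rw [if_neg (by omega), if_neg (by omega), if_neg (by omega), if_neg (by omega)]
  · rw [if_neg (by omega : ¬ (M.1 ≠ 0 ∧ ((m + 5 : ℕ) : ℤ) ≤ r M ∧ (5 : ℤ) ∣ r M - (m + 5 : ℕ))),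
      if_neg (by omega : ¬ (M.1 ≠ 0 ∧ ((m + 1 : ℕ) : ℤ) ≤ r M))]
    congr 1
    exact if_congr (and_congr_right fun _ => by omega) rfl rfl
  · have e1 : (M.1 ≠ 0 ∧ (m : ℤ) ≤ r M ∧ (5 : ℤ) ∣ r M - m) ↔
        (M.1 ≠ 0 ∧ ((m + 5 : ℕ) : ℤ) ≤ r M ∧ (5 : ℤ) ∣ r M - (m + 5 : ℕ)) :=
      and_congr_right fun _ => by omega
    have e2 : (M.1 ≠ 0 ∧ (m : ℤ) ≤ r M) ↔ (M.1 ≠ 0 ∧ ((m + 1 : ℕ) : ℤ) ≤ r M) :=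
      and_congr_right fun _ => by omega
    rw [if_congr e1 rfl rfl, if_congr e2 rfl rfl, sub_self, sub_self]

theorem eq_of_step_five {X Y : ℕ → ℂ} (hX : Tendsto X atTop (𝓝 0)) (hY : Tendsto Y atTop (𝓝 0))
    (h : ∀ m, X m - X (m + 5) = Y m - Y (m + 5)) (m : ℕ) : X m = Y m := by
  have key : ∀ k, X (m + 5 * k) - Y (m + 5 * k) = X m - Y m := by
    intro k
    induction k with
    | zero => rfl
    | succ k ih =>
      rw [← ih, mul_add, mul_one, ← add_assoc]
      linear_combination -h (m + 5 * k)
  have hl := (hX.sub hY).comp (tendsto_add_five_mul m)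
  rw [sub_zero] at hl
  exact sub_eq_zero.1 (tendsto_nhds_unique (tendsto_const_nhds.congr fun k => (key k).symm) hl)

theorem classGen_eq {ℓ : ℂ} (hℓ : ℓ.re ≤ -1) {r : PosMultiset → ℤ}
    (hr : ∀ m, tailGen r (cexp (2 * ℓ)) m = cexp (2 * ℓ) ^ (m + 1) *
      (partGen (cexp (2 * ℓ)) - tailGen r (cexp (2 * ℓ)) (m + 3))) (m : ℕ) :
    classGen r (cexp (2 * ℓ)) m = partGen (cexp (2 * ℓ)) * ∑' n, classTerm ℓ m n := by
  have hq := norm_exp_two_mul_lt hℓ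
  refine eq_of_step_five (Y := fun m => partGen (cexp (2 * ℓ)) * ∑' n, classTerm ℓ m n)
    (tendsto_classGen hq r) ?_ (fun m => ?_) m
  · simpa using (tendsto_tsum_classTerm hℓ).const_mul (partGen (cexp (2 * ℓ)))
  · rw [classGen_sub hq, tailGen_eq hℓ hr, tailGen_eq hℓ hr]
    linear_combination -partGen (cexp (2 * ℓ)) * tsum_classTerm_sub hℓ m

open Classical in
/-- The generating function of partitions whose rank is congruent to `k` modulo five. -/
noncomputable def rankGen (q : ℂ) (k : ℤ) : ℂ :=
  ∑' M : PosMultiset, if (5 : ℤ) ∣ M.rank - k then q ^ M.1.sum else 0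

theorem rankGen_eq_classGen {q : ℂ} (hq : ‖q‖ < 1 / 2) {k j : ℕ} (hk : 0 < k) (hj : 0 < j)
    (hkj : k + j = 5) :
    rankGen q k = classGen PosMultiset.rank q k + classGen (-PosMultiset.rank) q j := by
  classical
  rw [rankGen, classGen, classGen,
    ← (summable_ite_pow_sum hq _).tsum_add (summable_ite_pow_sum hq _)]
  refine tsum_congr fun M => ?_
  rw [Pi.neg_apply]
  have h0 : M.1 = 0 → M.rank = 0 := fun h => by
    rw [PosMultiset.rank, h]
    rfl
  by_cases hd : (5 : ℤ) ∣ M.rank - k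
  · by_cases hs : (k : ℤ) ≤ M.rank
    · rw [if_pos hd, if_pos ⟨fun h => by have := h0 h; omega, by omega⟩,
        if_neg (by omega), add_zero]
    · rw [if_pos hd, if_neg (by omega),
        if_pos ⟨fun h => by have := h0 h; omega, by omega⟩, zero_add]
  · rw [if_neg hd, if_neg (by omega), if_neg (by omega), add_zero]

theorem rankLam_sub {ℓ : ℂ} (hℓ : ℓ.re ≤ -1) {k j : ℕ} (hkj : k + j = 5) :
    rankLam ℓ k - rankLam ℓ (k - 1) = ∑' n, classTerm ℓ k n + ∑' n, classTerm ℓ j n := by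
  have hℓ' : ℓ.re < 0 := by linarith
  have h := HasSum.of_add_one_of_neg_add_one
    (f := fun n : ℤ => rankTerm ℓ k n - rankTerm ℓ (k - 1) n)
    ((summable_classTerm hℓ k).hasSum.congr_fun fun n => ?_)
    ((summable_classTerm hℓ j).hasSum.congr_fun fun n => ?_)
  · rw [rankLam, rankLam, ← (summable_rankTerm hℓ' k).tsum_sub (summable_rankTerm hℓ' _), h.tsum_eq]
    simp [rankTerm]
  · have h1 : cexp ((3 * (((n : ℤ) + 1 : ℤ) : ℂ) ^ 2 + ((n : ℤ) + 1 : ℤ) +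
        2 * ((k : ℤ) : ℂ) * ((n : ℤ) + 1 : ℤ)) * ℓ) = cexp ((3 * (n + 1) ^ 2 - (n + 1)) * ℓ) *
        (cexp (2 * ℓ) ^ (n + 1)) ^ k * cexp (2 * ℓ) ^ (n + 1) := by
      simp only [← Complex.exp_nat_mul, ← Complex.exp_add]
      congr 1
      push_cast; ring
    have h2 : cexp ((3 * (((n : ℤ) + 1 : ℤ) : ℂ) ^ 2 + ((n : ℤ) + 1 : ℤ) +
        2 * ((k - 1 : ℤ) : ℂ) * ((n : ℤ) + 1 : ℤ)) * ℓ) =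
        cexp ((3 * (n + 1) ^ 2 - (n + 1)) * ℓ) * (cexp (2 * ℓ) ^ (n + 1)) ^ k := by
      simp only [← Complex.exp_nat_mul, ← Complex.exp_add]
      congr 1
      push_cast; ring
    have h3 : cexp (10 * (((n : ℤ) + 1 : ℤ) : ℂ) * ℓ) = (cexp (2 * ℓ) ^ (n + 1)) ^ 5 := by
      simp only [← Complex.exp_nat_mul]
      congr 1
      push_cast; ring
    have e : ((-1 : ℂ)) ^ ((n : ℤ) + 1) = -(-1) ^ n := by
      rw [zpow_add₀ (by norm_num)]; simp
    rw [rankTerm, rankTerm, h1, h2, h3, e, classTerm, pentTerm]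
    ring
  · have hw := one_sub_pow_five_ne_zero (norm_pow_succ_le (norm_exp_two_mul_lt hℓ) n)
    have hw0 : cexp (2 * ℓ) ^ (n + 1) ≠ 0 := pow_ne_zero _ (Complex.exp_ne_zero _)
    have hkj' : (j : ℂ) = 5 - k := by
      rw [eq_sub_iff_add_eq', ← Nat.cast_add, hkj]
      rfl
    have h1 : cexp ((3 * ((-((n : ℤ) + 1) : ℤ) : ℂ) ^ 2 + (-((n : ℤ) + 1) : ℤ) +
        2 * ((k : ℤ) : ℂ) * (-((n : ℤ) + 1) : ℤ)) * ℓ) =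
        cexp ((3 * (n + 1) ^ 2 - (n + 1)) * ℓ) *
        (cexp (2 * ℓ) ^ (n + 1)) ^ j / (cexp (2 * ℓ) ^ (n + 1)) ^ 5 := by
      simp only [← Complex.exp_nat_mul, ← Complex.exp_add, ← Complex.exp_sub]
      congr 1
      push_cast
      rw [hkj']
      ring
    have h2 : cexp ((3 * ((-((n : ℤ) + 1) : ℤ) : ℂ) ^ 2 + (-((n : ℤ) + 1) : ℤ) +
        2 * ((k - 1 : ℤ) : ℂ) * (-((n : ℤ) + 1) : ℤ)) * ℓ) =
        cexp ((3 * (n + 1) ^ 2 - (n + 1)) * ℓ) *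
        (cexp (2 * ℓ) ^ (n + 1)) ^ j * cexp (2 * ℓ) ^ (n + 1) / (cexp (2 * ℓ) ^ (n + 1)) ^ 5 := by
      simp only [← Complex.exp_nat_mul, ← Complex.exp_add, ← Complex.exp_sub]
      congr 1
      push_cast
      rw [hkj']
      ring
    have h3 : cexp (10 * ((-((n : ℤ) + 1) : ℤ) : ℂ) * ℓ) =
        ((cexp (2 * ℓ) ^ (n + 1)) ^ 5)⁻¹ := by
      simp only [← Complex.exp_nat_mul, ← Complex.exp_neg]
      congr 1
      push_cast; ring
    have e : ((-1 : ℂ)) ^ (-((n : ℤ) + 1)) = -(-1) ^ n := by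
      rw [zpow_neg, zpow_add₀ (by norm_num), mul_inv, ← inv_zpow]
      simp
    rw [rankTerm, rankTerm, h1, h2, h3, e, classTerm, pentTerm]
    generalize cexp (2 * ℓ) ^ (n + 1) = w at *
    generalize cexp ((3 * (n + 1) ^ 2 - (n + 1)) * ℓ) = E
    have hw' : w ^ 5 - 1 ≠ 0 := fun h => hw (by linear_combination -h)
    have e5 : 1 - (w ^ 5)⁻¹ = (w ^ 5 - 1) / w ^ 5 := by field_simp
    have e6 : 1 - w ^ 5 = -(w ^ 5 - 1) := by ring
    rw [e5, e6]
    field_simp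
    ring

theorem rankGen_eq {ℓ : ℂ} (hℓ : ℓ.re ≤ -1) {k : ℕ} (hk : 0 < k) (hk' : k < 5) :
    rankGen (cexp (2 * ℓ)) k =
      partGen (cexp (2 * ℓ)) * (rankLam ℓ k - rankLam ℓ (k - 1)) := by
  have hq := norm_exp_two_mul_lt hℓ
  obtain ⟨j, hj⟩ := Nat.exists_eq_add_of_lt hk'
  have hkj : k + (j + 1) = 5 := by omega
  rw [rankGen_eq_classGen hq hk j.succ_pos hkj, classGen_eq hℓ (tailGen_rank hq),
    classGen_eq hℓ (tailGen_neg_rank hq), rankLam_sub hℓ hkj]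
  ring

theorem hasSum_card_mul_pow {q : ℂ} (hq : ‖q‖ < 1 / 2) (p : PosMultiset → Prop)
    [DecidablePred p] :
    HasSum (fun n : ℕ => (Nat.card {π : Nat.Partition n // p (sigmaPartitionEquiv ⟨n, π⟩)} : ℂ) *
      q ^ n) (∑' M : PosMultiset, if p M then q ^ M.1.sum else 0) := by
  have h := (sigmaPartitionEquiv.hasSum_iff.2 (summable_ite_pow_sum hq p).hasSum).sigma
    fun n => hasSum_fintype _
  refine h.congr_fun fun n => ?_
  have e : ∀ π : Nat.Partition n,
      ((fun M : PosMultiset => if p M then q ^ M.1.sum else 0) ∘ sigmaPartitionEquiv) ⟨n, π⟩ =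
        if p (sigmaPartitionEquiv ⟨n, π⟩) then q ^ n else 0 := by
    intro π
    have : (sigmaPartitionEquiv ⟨n, π⟩).1.sum = n := π.parts_sum
    simp only [Function.comp_apply, this]
  rw [Finset.sum_congr rfl fun π _ => e π, ← Finset.sum_filter, Finset.sum_const, nsmul_eq_mul,
    Nat.card_eq_fintype_card, Fintype.card_subtype]

/-- The deviation from equidistribution of the ranks of the partitions of `n`. -/
noncomputable def rankDev (k : ℤ) (n : ℕ) : ℂ :=
  (Nat.card {π : Nat.Partition n // π.rank ≡ k [ZMOD 5]} : ℂ) - (Nat.card (Nat.Partition n) : ℂ) / 5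

theorem hasSum_rankDev {q : ℂ} (hq : ‖q‖ < 1 / 2) (k : ℤ) :
    HasSum (fun n => rankDev k n * q ^ n) (rankGen q k - partGen q / 5) := by
  classical
  have h1 := hasSum_card_mul_pow hq fun M => (5 : ℤ) ∣ M.rank - k
  have h2 := hasSum_card_mul_pow hq fun _ => True
  simp only [if_true] at h2
  refine (h1.sub (h2.div_const 5)).congr_fun fun n => ?_
  have e1 : Nat.card {π : Nat.Partition n // (5 : ℤ) ∣ (sigmaPartitionEquiv ⟨n, π⟩).rank - k} =
      Nat.card {π : Nat.Partition n // π.rank ≡ k [ZMOD 5]} :=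
    Nat.card_congr (Equiv.subtypeEquivRight fun π => by
      rw [← Int.modEq_iff_dvd]
      exact ⟨Int.ModEq.symm, Int.ModEq.symm⟩)
  have e2 : Nat.card {_π : Nat.Partition n // True} = Nat.card (Nat.Partition n) :=
    Nat.card_congr (Equiv.subtypeUnivEquiv fun _ => trivial)
  rw [e1, e2, rankDev]
  ring

theorem geom_sum_pow_eq_zero {ω : ℂ} (hω : IsPrimitiveRoot ω 5) {i : ℕ} (hi : ¬ 5 ∣ i) :
    ∑ j ∈ Finset.range 5, (ω ^ j) ^ i = 0 := by
  have h1 : ω ^ i ≠ 1 := fun h => hi (hω.pow_eq_one_iff_dvd i |>.1 h)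
  have e : ∀ j ∈ Finset.range 5, (ω ^ j) ^ i = (ω ^ i) ^ j := fun j _ => by
    rw [← pow_mul, ← pow_mul, mul_comm]
  rw [Finset.sum_congr rfl e, geom_sum_eq h1, ← pow_mul, mul_comm i 5, pow_mul, hω.pow_eq_one,
    one_pow, sub_self, zero_div]

/-- A power series whose sum splits into components of residues `0, 1, 2, 3` modulo five has no
coefficients of residue `4`. -/
theorem coeff_eq_zero_of_dissection {a : ℕ → ℂ} {f : ℂ → ℂ}
    (hf : ∀ q : ℂ, ‖q‖ < 1 / 2 → HasSum (fun n => a n * q ^ n) (f q)) {g : Fin 4 → ℂ → ℂ}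
    (hg : ∀ i ℓ, ℓ.re ≤ -1 → g i (ℓ + Real.pi * I / 5) = g i ℓ)
    (h : ∀ ℓ : ℂ, ℓ.re ≤ -1 → f (cexp (2 * ℓ)) = ∑ i : Fin 4, cexp (2 * ℓ) ^ (i : ℕ) * g i ℓ)
    (n : ℕ) : a (5 * n + 4) = 0 := by
  obtain ⟨ω, hω⟩ : ∃ ω, ω = cexp (2 * Real.pi * I / (5 : ℕ)) := ⟨_, rfl⟩
  have hprim : IsPrimitiveRoot ω 5 := hω ▸ Complex.isPrimitiveRoot_exp 5 (by norm_num)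
  have hnorm : ∀ j : ℕ, ‖ω ^ j‖ = 1 := fun j => by
    rw [norm_pow, hprim.norm'_eq_one (by norm_num), one_pow]
  have hre : ∀ (j : ℕ) (ℓ : ℂ), (ℓ + j * (Real.pi * I / 5)).re = ℓ.re := by
    intro j ℓ
    induction j with
    | zero => simp
    | succ j ih =>
      rw [Nat.cast_succ, add_one_mul, ← add_assoc, re_add_pi_mul_I, ih]
  have hper : ∀ (j : ℕ) i ℓ, ℓ.re ≤ -1 → g i (ℓ + j * (Real.pi * I / 5)) = g i ℓ := by
    intro j i ℓ hℓ
    induction j with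
    | zero => simp
    | succ j ih =>
      rw [Nat.cast_succ, add_one_mul, ← add_assoc, hg i _ (by rw [hre]; exact hℓ), ih]
  have hmul : ∀ (j : ℕ) (ℓ : ℂ), cexp (2 * (ℓ + j * (Real.pi * I / 5))) =
      ω ^ j * cexp (2 * ℓ) := by
    intro j ℓ
    rw [hω, ← Complex.exp_nat_mul, ← Complex.exp_add]
    congr 1
    push_cast; ring
  have hzero : ∀ ℓ : ℂ, ℓ.re ≤ -1 →
      ∑ j ∈ Finset.range 5, ω ^ j * f (ω ^ j * cexp (2 * ℓ)) = 0 := by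
    intro ℓ hℓ
    have e : ∀ j ∈ Finset.range 5, ω ^ j * f (ω ^ j * cexp (2 * ℓ)) =
        ∑ i : Fin 4, (cexp (2 * ℓ) ^ (i : ℕ) * g i ℓ) * (ω ^ j) ^ ((i : ℕ) + 1) := by
      intro j _
      rw [← hmul, h _ (by rw [hre]; exact hℓ), Finset.mul_sum]
      refine Finset.sum_congr rfl fun i _ => ?_
      rw [hper j i ℓ hℓ, hmul]
      ring
    rw [Finset.sum_congr rfl e, Finset.sum_comm]
    refine Finset.sum_eq_zero fun i _ => ?_
    rw [← Finset.mul_sum, geom_sum_pow_eq_zero hprim (by omega), mul_zero]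
  have hsum : ∀ q : ℂ, ‖q‖ < 1 / 2 →
      HasSum (fun n => q ^ n * (a n * ∑ j ∈ Finset.range 5, (ω ^ j) ^ (n + 1)))
        (∑ j ∈ Finset.range 5, ω ^ j * f (ω ^ j * q)) := by
    intro q hq
    refine (hasSum_sum fun j _ => (hf (ω ^ j * q) (by rwa [norm_mul, hnorm, one_mul])).mul_left
      (ω ^ j)).congr_fun fun n => ?_
    rw [Finset.mul_sum, Finset.mul_sum]
    refine Finset.sum_congr rfl fun j _ => ?_
    rw [mul_pow]
    ring
  have hser : HasFPowerSeriesAt (fun _ : ℂ => (0 : ℂ)) (FormalMultilinearSeries.ofScalars ℂ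
      fun n => a n * ∑ j ∈ Finset.range 5, (ω ^ j) ^ (n + 1)) 0 := by
    rw [hasFPowerSeriesAt_iff]
    filter_upwards [Metric.ball_mem_nhds (0 : ℂ) (Real.exp_pos (-2))] with z hz
    rw [mem_ball_zero_iff] at hz
    have hlt : Real.exp (-2) < 1 / 2 := by
      have := Real.exp_neg_one_lt_d9
      linarith [Real.exp_le_exp.2 (by norm_num : (-2 : ℝ) ≤ -1)]
    have hs := hsum z (hz.trans hlt)
    have hval : ∑ j ∈ Finset.range 5, ω ^ j * f (ω ^ j * z) = 0 := by
      rcases eq_or_ne z 0 with rfl | hz0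
      · simp only [mul_zero]
        rw [← Finset.sum_mul]
        have := geom_sum_pow_eq_zero hprim (i := 1) (by norm_num)
        simp only [pow_one] at this
        rw [this, zero_mul]
      · have e : cexp (2 * (Complex.log z / 2)) = z := by
          rw [mul_div_cancel₀ _ (by norm_num : (2 : ℂ) ≠ 0), Complex.exp_log hz0]
        have := hzero (Complex.log z / 2) (by
          have h1 := Real.log_lt_log (norm_pos_iff.2 hz0) hz
          rw [Real.log_exp] at h1
          have h2 : (Complex.log z / 2).re = Real.log ‖z‖ / 2 := by
            rw [← Complex.log_re]
            simp
          linarith)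
        rwa [e] at this
    rw [hval] at hs
    simpa [FormalMultilinearSeries.coeff_ofScalars] using hs
  have hc := congrArg (fun p => FormalMultilinearSeries.coeff p (5 * n + 4)) hser.eq_zero
  simp only [FormalMultilinearSeries.coeff_ofScalars] at hc
  have h5 : ∑ j ∈ Finset.range 5, (ω ^ j) ^ (5 * n + 4 + 1) = 5 := by
    have e : ∀ j ∈ Finset.range 5, (ω ^ j) ^ (5 * n + 4 + 1) = 1 := by
      intro j _
      rw [← pow_mul, show j * (5 * n + 4 + 1) = 5 * (j * (n + 1)) by ring, pow_mul,
        hprim.pow_eq_one, one_pow]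
    rw [Finset.sum_congr rfl e]
    simp
  rw [h5] at hc
  exact (mul_eq_zero.1 hc).resolve_right (by norm_num)

theorem rankDev_eq_zero {k : ℕ} (hk : 0 < k) (hk' : k < 5) (n : ℕ) :
    rankDev k (5 * n + 4) = 0 := by
  obtain ⟨g, hg, hg'⟩ := isFourDissected_one
  obtain ⟨u, hu, hu'⟩ := isFourDissected_zero
  obtain ⟨α, β, hαβ⟩ : ∃ α β : ℂ, ∀ ℓ, rankLam ℓ k - rankLam ℓ (k - 1) - 1 / 5 =
      α * (rankLam ℓ 1 + 1 / 5) + β * (rankLam ℓ 0 + 2 / 5) := by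
    have h3 : ∀ ℓ, rankLam ℓ 3 = -rankLam ℓ 1 := fun ℓ => rankLam_four_sub ℓ 1
    have h4 : ∀ ℓ, rankLam ℓ 4 = -rankLam ℓ 0 := fun ℓ => rankLam_four_sub ℓ 0
    have h2 := rankLam_two
    interval_cases k <;> norm_num [h2, h3, h4]
    · exact ⟨1, -1, fun ℓ => by ring⟩
    · exact ⟨-1, 0, fun ℓ => by ring⟩
    · exact ⟨-1, 0, fun ℓ => by ring⟩
    · exact ⟨1, -1, fun ℓ => by ring⟩
  refine coeff_eq_zero_of_dissection (fun q hq => hasSum_rankDev hq k)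
    (g := fun i ℓ => α * g i ℓ + β * u i ℓ) (fun i ℓ hℓ => ?_) (fun ℓ hℓ => ?_) n
  · simp only [hg i ℓ hℓ, hu i ℓ hℓ]
  · have hp := partGen_mul_theta hℓ
    have e : ∑ i : Fin 4, cexp (2 * ℓ) ^ (i : ℕ) * (α * g i ℓ + β * u i ℓ) =
        α * ∑ i : Fin 4, cexp (2 * ℓ) ^ (i : ℕ) * g i ℓ +
          β * ∑ i : Fin 4, cexp (2 * ℓ) ^ (i : ℕ) * u i ℓ := by
      rw [Finset.mul_sum, Finset.mul_sum, ← Finset.sum_add_distrib]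
      exact Finset.sum_congr rfl fun i _ => by ring
    rw [e, rankGen_eq hℓ hk hk']
    linear_combination partGen (cexp (2 * ℓ)) * hαβ ℓ + α * partGen (cexp (2 * ℓ)) * hg' ℓ hℓ +
      β * partGen (cexp (2 * ℓ)) * hu' ℓ hℓ +
      (α * ∑ i : Fin 4, cexp (2 * ℓ) ^ (i : ℕ) * g i ℓ +
        β * ∑ i : Fin 4, cexp (2 * ℓ) ^ (i : ℕ) * u i ℓ) * hp

theorem sum_card_rank (n : ℕ) :
    ∑ k ∈ Finset.range 5, Nat.card {π : Nat.Partition n // π.rank ≡ k [ZMOD 5]} =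
      Nat.card (Nat.Partition n) := by
  classical
  rw [Nat.card_eq_fintype_card, ← Finset.card_univ,
    Finset.card_eq_sum_card_fiberwise (f := fun π : Nat.Partition n => (π.rank % 5).toNat)
      (t := Finset.range 5) (fun π _ => by simp; omega)]
  refine Finset.sum_congr rfl fun k hk => ?_
  rw [Nat.card_eq_fintype_card, Fintype.card_subtype]
  have hk5 := Finset.mem_range.1 hk
  refine congrArg Finset.card (Finset.filter_congr fun π _ => ?_)
  rw [Int.ModEq]
  omega

end DysonRank

/-- Dyson's conjecture mod 5 (Atkin–Swinnerton-Dyer): for `0 ≤ k ≤ 4`,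
`N(k,5,5n+4) = p(5n+4)/5`, where `N(k,t,m)` counts partitions of `m` whose rank is
congruent to `k` modulo `t`. -/
theorem rank_equidistribution_mod_five (n : ℕ) (k : ℤ) (hk₀ : 0 ≤ k) (hk₁ : k ≤ 4) :
    (Nat.card {π : Nat.Partition (5 * n + 4) // π.rank ≡ k [ZMOD 5]} : ℚ) =
      (Nat.card (Nat.Partition (5 * n + 4)) : ℚ) / 5 := by
  have h : ∀ k : ℕ, 0 < k → k < 5 →
      (Nat.card {π : Nat.Partition (5 * n + 4) // π.rank ≡ k [ZMOD 5]} : ℚ) =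
        (Nat.card (Nat.Partition (5 * n + 4)) : ℚ) / 5 := by
    intro k hk hk'
    have := sub_eq_zero.1 (DysonRank.rankDev_eq_zero hk hk' n)
    exact Rat.cast_injective (α := ℂ) (by push_cast; exact this)
  lift k to ℕ using hk₀
  rcases Nat.eq_zero_or_pos k with rfl | hk
  · have hs := DysonRank.sum_card_rank (5 * n + 4)
    simp only [Finset.sum_range_succ, Finset.range_zero, Finset.sum_empty, zero_add] at hs
    have hs' := congrArg (Nat.cast : ℕ → ℚ) hs
    rw [Nat.cast_add, Nat.cast_add, Nat.cast_add, Nat.cast_add, h 1 (by norm_num) (by norm_num),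
      h 2 (by norm_num) (by norm_num), h 3 (by norm_num) (by norm_num),
      h 4 (by norm_num) (by norm_num)] at hs'
    linear_combination hs'
  · exact h k hk (by omega)
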